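/- If the Riemann Hypothesis holds, then there exists x_0 such that for all real x ≥ x_0, the quantity R(x) = ∑_{p ≤ x, p prime} 1/p − log(log x) − B_1 satisfies |R(x)| ≤ (3 log x + 4)/(8π √x). -/

import Mathlib

/-! Centre the `ξ`-function at `1/2` and call it `Ξ`. It is even and entire with
`log ‖Ξ z‖ = o(‖z‖²)`, and under the Riemann Hypothesis all its zeros `iγ` are purely imaginary.
Dividing out the zeros in a large disc and applying Borel–Carathéodory to the zero-free quotient
gives the partial fraction expansion of `Ξ'/Ξ` in the right half plane (`hasSum_logDeriv`); no count
of the zeros is needed. Together with the expansion of the digamma function it becomes the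
Mittag-Leffler expansion of `-ζ'/ζ` (`exists_zeta_identity`).

Dividing by `s²` and using uniqueness of Laplace transforms turns this expansion into an explicit
formula for the smoothed Chebyshev function `φ(u) = ∑ Λ(n) (u - log n)⁺` (`explicit_formula`), whose
sum over the zeros `ρ` converges absolutely. Hence `φ(u) = e^u + O(e^(u/2))`.

Since `φ` is convex with slope `ψ(e^u)`, difference quotients of `φ` with step `h = e^(-u/2)` bracket
`ψ(e^u)`. With `A = 1/h`, a zero enters such a quotient with size at most about
`3/2 · e^(u/2) · min(1/|ρ|, 2A/|ρ|²)`. Evaluating `Ξ'/Ξ` at a real point `a ≥ 1` gives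
`∑ a/(a² + γ²) ≤ ½ log a + O(1)`; integrating this against `da/a` over `[1, A]` gives
`∑ min(1/|ρ|, 2A/|ρ|²) ≤ ¼ log² A + O(log A + 1)` (`exists_sum_wt_le`). As `log A = u/2`, the result is
`|ψ(x) - x| ≤ √x (3/32 · log² x + O(log x + 1))` (`exists_psi_bound`).

Two partial summations (`lsum_sub`) and the bound `O(1/√x)` for the tail of the proper prime powers
turn this into `|R(x)| ≤ (3/32 · log x + C)/√x` (`exists_mertens_bound`). Since `π < 4`, the constant
`3/32` is smaller than `3/(8π)`, and for large `x` the difference absorbs `C`. -/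

/-! ### Partial fractions of even entire functions with imaginary zeros -/

namespace MertensRH
open Complex Filter Topology

/-- An entire function, not identically zero, is divisible by `(z - ρ) ^ n`, with `n` its order of
vanishing at `ρ`, and the quotient is entire and does not vanish at `ρ`. -/
lemma exists_entire_quotient {g : ℂ → ℂ} (hg : Differentiable ℂ g) (ρ : ℂ)
    (htop : analyticOrderAt g ρ ≠ ⊤) :
    ∃ h : ℂ → ℂ, Differentiable ℂ h ∧ h ρ ≠ 0 ∧
      ∀ z, g z = (z - ρ) ^ analyticOrderNatAt g ρ * h z := by
  obtain ⟨k, hk, hk0, hev⟩ := (hg.analyticAt ρ).analyticOrderAt_ne_top.1 htop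
  set n := analyticOrderNatAt g ρ
  classical
  let h : ℂ → ℂ := Function.update (fun z => g z / (z - ρ) ^ n) ρ (k ρ)
  have hne : ∀ z, z ≠ ρ → h z = g z / (z - ρ) ^ n := fun z hz => by simp [h, hz]
  have hρ : h ρ = k ρ := by simp [h]
  have hloc : h =ᶠ[𝓝 ρ] k := by
    filter_upwards [hev] with z hz
    rcases eq_or_ne z ρ with rfl | hzρ
    · exact hρ
    · have : (z - ρ) ^ n ≠ 0 := pow_ne_zero _ (sub_ne_zero.2 hzρ)
      rw [hne z hzρ, hz, smul_eq_mul]; field_simp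
  refine ⟨h, fun z => ?_, by rwa [hρ], fun z => ?_⟩
  · rcases eq_or_ne z ρ with rfl | hzρ
    · exact hk.differentiableAt.congr_of_eventuallyEq hloc
    · have hev' : h =ᶠ[𝓝 z] fun z => g z / (z - ρ) ^ n := by
        filter_upwards [isOpen_ne.mem_nhds hzρ] with w hw using hne w hw
      refine DifferentiableAt.congr_of_eventuallyEq ?_ hev'
      have : (z - ρ) ^ n ≠ 0 := pow_ne_zero _ (sub_ne_zero.2 hzρ)
      exact (hg z).div (by fun_prop) this
  · rcases eq_or_ne z ρ with rfl | hzρ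
    · have := hev.self_of_nhds
      rw [hρ]; simpa using this
    · have : (z - ρ) ^ n ≠ 0 := pow_ne_zero _ (sub_ne_zero.2 hzρ)
      rw [hne z hzρ]; field_simp

/-- Finitely many zeros of an entire function can be divided out, with multiplicity. -/
lemma exists_entire_factor {f : ℂ → ℂ} (hf : Differentiable ℂ f) {w : ℂ} (hw : f w ≠ 0)
    (S : Finset ℂ) :
    ∃ g : ℂ → ℂ, Differentiable ℂ g ∧ (∀ ρ ∈ S, g ρ ≠ 0) ∧
      ∀ z, f z = (∏ ρ ∈ S, (z - ρ) ^ analyticOrderNatAt f ρ) * g z := by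
  classical
  have htop : ∀ ρ, analyticOrderAt f ρ ≠ ⊤ := fun ρ h => by
    rw [AnalyticOnNhd.analyticOrderAt_eq_top_iff_eq_zero ρ (fun z => hf.analyticAt z)] at h
    exact hw (by simp [h])
  induction S using Finset.induction_on with
  | empty => exact ⟨f, hf, by simp, by simp⟩
  | insert ρ S hρ ih =>
    obtain ⟨g, hg, hgS, hfg⟩ := ih
    have hprod : analyticOrderAt (fun z => ∏ σ ∈ S, (z - σ) ^ analyticOrderNatAt f σ) ρ = 0 := by
      rw [AnalyticAt.analyticOrderAt_eq_zero (by fun_prop)]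
      refine Finset.prod_ne_zero_iff.2 fun σ hσ => pow_ne_zero _ (sub_ne_zero.2 ?_)
      rintro rfl; exact hρ hσ
    have hord : analyticOrderAt f ρ = analyticOrderAt g ρ := by
      have h1 : f = (fun z => ∏ σ ∈ S, (z - σ) ^ analyticOrderNatAt f σ) * g := by
        ext z; exact hfg z
      conv_lhs => rw [h1]
      rw [analyticOrderAt_mul (by fun_prop) (hg.analyticAt ρ), hprod, zero_add]
    obtain ⟨h, hh, hhρ, hgh⟩ := exists_entire_quotient hg ρ (hord ▸ htop ρ)
    have hord' : analyticOrderNatAt g ρ = analyticOrderNatAt f ρ := by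
      simp [analyticOrderNatAt, hord]
    refine ⟨h, hh, fun σ hσ => ?_, fun z => ?_⟩
    · rcases Finset.mem_insert.1 hσ with rfl | hσS
      · exact hhρ
      · intro h0
        exact hgS σ hσS (by rw [hgh, h0, mul_zero])
    · rw [Finset.prod_insert hρ, hfg z, hgh z, hord']; ring

/-- If `g` is holomorphic and zero-free near a disc around `1` of radius `r` and `‖g / g 1‖ ≤ exp B`
there, then its logarithmic derivative varies little on the concentric disc of radius `r / 4`:
Borel–Carathéodory applied to `log (g / g 1)`, followed by two Cauchy estimates. -/
lemma norm_logDeriv_sub_le {g : ℂ → ℂ} (hg : Differentiable ℂ g) {r B : ℝ} (hr : 0 < r) (hB : 0 < B)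
    (hne : ∀ z, ‖z - 1‖ < r → g z ≠ 0)
    (hbd : ∀ z, ‖z - 1‖ < r → ‖g z‖ ≤ ‖g 1‖ * Real.exp B) {z w : ℂ}
    (hz : ‖z - 1‖ < r / 4) (hw : ‖w - 1‖ < r / 4) :
    ‖logDeriv g z - logDeriv g w‖ ≤ 128 * B / r ^ 2 * ‖z - w‖ := by
  have hsub : ∀ z ∈ Metric.ball (1:ℂ) r, ‖z - 1‖ < r := fun z hz => by
    simpa [dist_eq_norm] using hz
  have hdl : DifferentiableOn ℂ (logDeriv g) (Metric.ball 1 r) := fun z hz => by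
    have h1 : DifferentiableAt ℂ (deriv g) z := (hg.analyticAt z).deriv.differentiableAt
    exact (h1.div (hg z) (hne z (hsub z hz))).differentiableWithinAt
  obtain ⟨L, hL1, hL⟩ := (hdl.isExactOn_ball).with_val_at 1 0
  have hexp : ∀ z ∈ Metric.ball (1:ℂ) r, g z * exp (-L z) = g 1 := by
    intro z hz
    have hconst := (convex_ball (1:ℂ) r).is_const_of_fderivWithin_eq_zero (𝕜 := ℂ)
      (f := fun z => g z * exp (-L z)) (x := z) (y := 1) ?_ ?_ hz (by simpa using hr)
    · simpa [hL1] using hconst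
    · intro x hx
      exact ((hg x).mul ((hL x hx).differentiableAt.neg.cexp)).differentiableWithinAt
    · intro x hx
      have h2 : HasDerivAt (fun z => g z * exp (-L z)) 0 x := by
        have := (hg x).hasDerivAt.mul ((hL x hx).neg.cexp)
        refine this.congr_deriv ?_
        rw [logDeriv_apply]
        field_simp [hne x (hsub x hx)]
        simp
      rw [fderivWithin_of_isOpen Metric.isOpen_ball hx]
      exact h2.hasFDerivAt.fderiv.trans (by ext; simp)
  have hg1 : g 1 ≠ 0 := hne 1 (by simpa using hr)
  have hre : ∀ z ∈ Metric.ball (1:ℂ) r, (L z).re ≤ B := by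
    intro z hz
    have h1 : ‖g z‖ * Real.exp (-(L z).re) = ‖g 1‖ := by
      rw [← hexp z hz, norm_mul, Complex.norm_exp]; simp
    have h2 := hbd z (hsub z hz)
    have h3 : ‖g z‖ = ‖g 1‖ * Real.exp (L z).re := by
      rw [← h1, mul_assoc, ← Real.exp_add]; simp
    rw [h3] at h2
    exact Real.exp_le_exp.1 (le_of_mul_le_mul_left h2 (norm_pos_iff.2 hg1))
  have hshift : ∀ z : ℂ, ‖z‖ < r → (1 + z) ∈ Metric.ball (1:ℂ) r := fun z hz => by
    simpa [dist_eq_norm] using hz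
  have hBC : ∀ z, ‖z - 1‖ ≤ r / 2 → ‖L z‖ ≤ 2 * B := by
    intro z hz
    have hzr : ‖z - 1‖ < r := by linarith
    have := borelCaratheodory_zero (f := fun z => L (1 + z)) (R := r) (M := B) (z := z - 1) hB ?_ ?_
      hr (by simpa using hzr) (by simpa using hL1)
    · simp only [add_sub_cancel] at this
      refine this.trans ?_
      rw [div_le_iff₀ (by linarith)]
      nlinarith
    · intro x hx
      have hx' := hshift x (by simpa using hx)
      have := (hL _ hx').differentiableAt
      exact (this.comp x (by fun_prop : DifferentiableAt ℂ (fun z => 1 + z) x)).differentiableWithinAt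
    · intro x hx
      exact hre _ (hshift x (by simpa using hx))
  have hdL : ∀ z ∈ Metric.ball (1:ℂ) r, deriv L z = logDeriv g z := fun z hz => (hL z hz).deriv
  have hC1 : ∀ z, ‖z - 1‖ ≤ 3 * r / 8 → ‖logDeriv g z‖ ≤ 16 * B / r := by
    intro z hz
    have hin : ∀ x, ‖x - z‖ ≤ r / 8 → ‖x - 1‖ ≤ r / 2 := fun x hx => by
      have := norm_add_le (x - z) (z - 1)
      rw [sub_add_sub_cancel] at this; linarith
    rw [← hdL z (by rw [Metric.mem_ball, dist_eq_norm]; linarith)]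
    have := norm_deriv_le_of_forall_mem_sphere_norm_le (c := z) (R := r / 8) (C := 2 * B) (f := L)
      (by linarith) ?_ ?_
    · refine this.trans (le_of_eq ?_); field_simp; norm_num
    · refine DifferentiableOn.diffContOnCl (s := Metric.ball z (r/8)) fun x hx => ?_
      have hx' := Metric.closure_ball_subset_closedBall hx
      rw [Metric.mem_closedBall, dist_eq_norm] at hx'
      have := hin x hx'
      exact (hL x (by rw [Metric.mem_ball, dist_eq_norm]; linarith)).differentiableAt.differentiableWithinAt
    · intro x hx
      rw [mem_sphere_iff_norm] at hx
      exact hBC x (hin x hx.le)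
  have hball : ∀ {x}, x ∈ Metric.ball (1:ℂ) (r / 4) ↔ ‖x - 1‖ < r / 4 := by
    intro x; rw [Metric.mem_ball, dist_eq_norm]
  have hmv := (convex_ball (1:ℂ) (r / 4)).norm_image_sub_le_of_norm_deriv_le (f := logDeriv g)
    (C := 128 * B / r ^ 2) ?_ ?_ (hball.2 hw) (hball.2 hz)
  · exact hmv
  · intro x hx
    rw [hball] at hx
    have hx' : x ∈ Metric.ball (1:ℂ) r := by rw [Metric.mem_ball, dist_eq_norm]; linarith
    exact (hdl x hx').differentiableAt (Metric.isOpen_ball.mem_nhds hx')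
  · intro z hz
    rw [hball] at hz
    have hin : ∀ x, ‖x - z‖ ≤ r / 8 → ‖x - 1‖ ≤ 3 * r / 8 := fun x hx => by
      have := norm_add_le (x - z) (z - 1)
      rw [sub_add_sub_cancel] at this; linarith
    have := norm_deriv_le_of_forall_mem_sphere_norm_le (c := z) (R := r / 8) (C := 16 * B / r)
      (f := logDeriv g) (by linarith) ?_ ?_
    · refine this.trans (le_of_eq ?_); field_simp; norm_num
    · refine DifferentiableOn.diffContOnCl (s := Metric.ball z (r/8)) fun x hx => ?_
      have hx' := Metric.closure_ball_subset_closedBall hx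
      rw [Metric.mem_closedBall, dist_eq_norm] at hx'
      have := hin x hx'
      have hx' : x ∈ Metric.ball (1:ℂ) r := by rw [Metric.mem_ball, dist_eq_norm]; linarith
      exact ((hdl x hx').differentiableAt (Metric.isOpen_ball.mem_nhds hx')).differentiableWithinAt
    · intro x hx
      rw [mem_sphere_iff_norm] at hx
      exact hC1 x (hin x hx.le)

lemma finite_zeros {f : ℂ → ℂ} (hf : Differentiable ℂ f) {w : ℂ} (hw : f w ≠ 0) (r : ℝ) :
    {γ : {γ : ℝ // f (γ * I) = 0} | ‖(γ : ℂ) * I - 1‖ ≤ r}.Finite := by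
  have h1 := AnalyticOnNhd.preimage_zero_mem_codiscrete (f := f) (fun z _ => hf.analyticAt z) hw
  have h2 := mem_codiscrete'.1 h1
  have h3 : (f ⁻¹' {0}ᶜ)ᶜ = {z | f z = 0} := by ext z; simp
  rw [h3] at h2
  have h4 : (Metric.closedBall (1:ℂ) r ∩ {z | f z = 0}).Finite := by
    have hcl : IsClosed {z | f z = 0} := isClosed_eq hf.continuous continuous_const
    exact ((isCompact_closedBall _ _).inter_right hcl).finite (h2.2.mono Set.inter_subset_right)
  refine Set.Finite.of_finite_image (f := fun γ : {γ : ℝ // f (γ * I) = 0} => (γ : ℂ) * I)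
    (h4.subset ?_) ?_
  · rintro _ ⟨γ, hγ, rfl⟩
    exact ⟨by rw [Metric.mem_closedBall, dist_eq_norm]; exact hγ, γ.2⟩
  · intro a _ b _ hab
    have : ((a:ℝ) : ℂ) = ((b:ℝ) : ℂ) := mul_right_cancel₀ I_ne_zero hab
    exact Subtype.ext (by exact_mod_cast this)

section EvenEntire

variable {f : ℂ → ℂ} (hf : Differentiable ℂ f) (heven : ∀ z, f (-z) = f z)
  (hzero : ∀ z, f z = 0 → z.re = 0) {M : ℝ → ℝ}
  (hM : ∀ r z, ‖z‖ ≤ r → ‖f z‖ ≤ Real.exp (M r))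
  (hlim : Tendsto (fun r => M r / r ^ 2) atTop (𝓝 0))

include hf heven hzero hM in
/-- Quantitative partial fraction expansion of the logarithmic derivative of an even entire function
all of whose zeros are purely imaginary. Dividing out the zeros in a disc of radius `r` leaves a
zero-free function whose logarithmic derivative hardly varies between `z` and `-z`. -/
lemma norm_logDeriv_sub_sum_le {z : ℂ} (hz : 0 < z.re) {r : ℝ} (hr1 : 1 ≤ r)
    (hr : ‖z‖ + 1 < r / 4) :
    ‖logDeriv f z - ∑ γ ∈ (finite_zeros hf (w := 1) (fun h => by simpa using hzero 1 h) r).toFinset,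
      (analyticOrderNatAt f ((γ : ℝ) * I) : ℂ) * (z / (z ^ 2 + (γ : ℝ) ^ 2))‖
      ≤ 128 * ((|M (3 * r)| + |Real.log ‖f 1‖| + 1) / r ^ 2) * ‖z‖ := by
  have hf1 : f 1 ≠ 0 := fun h => by simpa using hzero 1 h
  classical
  set S := (finite_zeros hf hf1 r).toFinset with hS
  have hmemS : ∀ γ : {γ : ℝ // f (γ * I) = 0}, γ ∈ S ↔ ‖(γ : ℂ) * I - 1‖ ≤ r := by
    intro γ; simp [hS]
  have hinj : Function.Injective (fun γ : {γ : ℝ // f (γ * I) = 0} => (γ : ℂ) * I) := by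
    intro a b hab
    have : ((a:ℝ) : ℂ) = ((b:ℝ) : ℂ) := mul_right_cancel₀ I_ne_zero hab
    exact Subtype.ext (by exact_mod_cast this)
  obtain ⟨g, hg, hgS, hfg⟩ := exists_entire_factor hf hf1
    (S.image fun γ : {γ : ℝ // f (γ * I) = 0} => (γ : ℂ) * I)
  replace hfg : ∀ z, f z = (∏ γ ∈ S, (z - (γ : ℝ) * I) ^ analyticOrderNatAt f ((γ : ℝ) * I)) * g z :=
    fun z => by rw [hfg z, Finset.prod_image hinj.injOn]
  set m : ℝ → ℕ := fun γ => analyticOrderNatAt f (γ * I) with hm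
  set P : ℂ → ℂ := fun z => ∏ γ ∈ S, (z - (γ : ℝ) * I) ^ m γ with hP
  have hPdiff : Differentiable ℂ P := by fun_prop
  have hfP : ∀ z, f z = P z * g z := hfg
  set B := |M (3 * r)| + |Real.log ‖f 1‖| + 1 with hB
  have hBpos : 0 < B := by positivity
  have hgne : ∀ z, ‖z - 1‖ < r → g z ≠ 0 := by
    intro x hx h0
    have hfx : f x = 0 := by rw [hfP, h0, mul_zero]
    have hx' : x = (x.im : ℂ) * I := by
      apply Complex.ext <;> simp [hzero x hfx]
    have hmem : (⟨x.im, by rwa [← hx']⟩ : {γ : ℝ // f (γ * I) = 0}) ∈ S := by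
      rw [hmemS]; simp only; rw [← hx']; exact hx.le
    have := hgS x (Finset.mem_image.2 ⟨_, hmem, hx'.symm⟩)
    exact this h0
  have hP1 : P 1 ≠ 0 := fun h => hf1 (by rw [hfP, h, zero_mul])
  have hsphere : ∀ x, ‖x - 1‖ = 2 * r → ‖g x‖ ≤ ‖g 1‖ * Real.exp B := by
    intro x hx
    have hPx : ‖P 1‖ ≤ ‖P x‖ := by
      simp only [hP, norm_prod, norm_pow]
      refine Finset.prod_le_prod (fun _ _ => by positivity) fun γ hγ => ?_
      have h1 := (hmemS γ).1 hγ
      have h2 := norm_sub_norm_le (x - 1) ((γ : ℂ) * I - 1)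
      rw [sub_sub_sub_cancel_right] at h2
      rw [norm_sub_rev] at h1
      have h3 := norm_sub_rev ((γ : ℂ) * I) 1
      gcongr
      linarith
    have hx3 : ‖x‖ ≤ 3 * r := by
      have := norm_add_le (x - 1) 1
      rw [sub_add_cancel, norm_one] at this; linarith
    have hfx := hM _ _ hx3
    have h1 : ‖f x‖ ≤ ‖f 1‖ * Real.exp B := by
      refine hfx.trans ?_
      conv_rhs => rw [← Real.exp_log (norm_pos_iff.2 hf1), ← Real.exp_add]
      apply Real.exp_le_exp.2
      have := le_abs_self (M (3 * r))
      have := neg_abs_le (Real.log ‖f 1‖)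
      linarith
    rw [hfP x, hfP 1, norm_mul, norm_mul] at h1
    have h2 : ‖P 1‖ * ‖g x‖ ≤ ‖P 1‖ * (‖g 1‖ * Real.exp B) := by
      calc _ ≤ ‖P x‖ * ‖g x‖ := by gcongr
        _ ≤ _ := by rw [← mul_assoc]; exact h1
    exact le_of_mul_le_mul_left h2 (norm_pos_iff.2 hP1)
  have hbd : ∀ x, ‖x - 1‖ < r → ‖g x‖ ≤ ‖g 1‖ * Real.exp B := by
    intro x hx
    refine norm_le_of_forall_mem_frontier_norm_le (U := Metric.ball (1:ℂ) (2 * r))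
      Metric.isBounded_ball hg.diffContOnCl (fun y hy => ?_) (subset_closure ?_)
    · rw [frontier_ball _ (by linarith : 2 * r ≠ 0), mem_sphere_iff_norm] at hy
      exact hsphere y hy
    · rw [Metric.mem_ball, dist_eq_norm]; linarith
  have hz1 : ‖z - 1‖ < r / 4 := (norm_sub_le _ _).trans_lt (by simpa using hr)
  have hz2 : ‖-z - 1‖ < r / 4 := (norm_sub_le _ _).trans_lt (by simpa using hr)
  have hmain := norm_logDeriv_sub_le hg (by linarith) hBpos hgne hbd hz1 hz2
  have hdecomp : ∀ x, f x ≠ 0 → logDeriv f x = (∑ γ ∈ S, (m γ : ℂ) / (x - (γ : ℝ) * I))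
      + logDeriv g x := by
    intro x hx
    have hPx : P x ≠ 0 := fun h => hx (by rw [hfP, h, zero_mul])
    have hgx : g x ≠ 0 := fun h => hx (by rw [hfP, h, mul_zero])
    have : f = fun z => P z * g z := funext hfP
    conv_lhs => rw [this]
    rw [logDeriv_mul x hPx hgx (hPdiff x) (hg x)]
    congr 1
    rw [hP, logDeriv_prod (fun γ hγ => Finset.prod_ne_zero_iff.1 hPx γ hγ) (fun _ _ => by fun_prop)]
    refine Finset.sum_congr rfl fun γ _ => ?_
    have h1 := logDeriv_fun_pow (f := fun z : ℂ => z - (γ : ℝ) * I) (x := x) (by fun_prop) (m γ)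
    rw [h1, logDeriv_apply]
    simp [div_eq_mul_inv]
  have hfz : f z ≠ 0 := fun h => hz.ne' (hzero z h)
  have hfz' : f (-z) ≠ 0 := by rwa [heven]
  have hodd : logDeriv f (-z) = -logDeriv f z := by
    have h1 : deriv f (-z) = - deriv f z := by
      have h2 : deriv (fun x => f (-x)) z = -deriv f (-z) := deriv_comp_neg f z
      have h3 : (fun x => f (-x)) = f := funext heven
      rw [h3] at h2
      rw [h2, neg_neg]
    rw [logDeriv_apply, logDeriv_apply, h1, heven, neg_div]
  have e1 := hdecomp z hfz
  have e2 := hdecomp (-z) hfz'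
  rw [hodd] at e2
  have hsum : ∑ γ ∈ S, (m γ : ℂ) * (z / (z ^ 2 + (γ : ℝ) ^ 2)) =
      ((∑ γ ∈ S, (m γ : ℂ) / (z - (γ : ℝ) * I)) - ∑ γ ∈ S, (m γ : ℂ) / (-z - (γ : ℝ) * I)) / 2 := by
    rw [← Finset.sum_sub_distrib, Finset.sum_div]
    refine Finset.sum_congr rfl fun γ _ => ?_
    have h1 : z - (γ : ℝ) * I ≠ 0 := fun h => hz.ne' (by
      have := congrArg re h; simpa using this)
    have h2 : -z - (γ : ℝ) * I ≠ 0 := fun h => hz.ne' (by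
      have := congrArg re h; simpa using this)
    have h3 : z ^ 2 + (γ : ℝ) ^ 2 = -((z - (γ : ℝ) * I) * (-z - (γ : ℝ) * I)) := by
      ring_nf; simp
    rw [h3]; field_simp; ring
  have hfin : logDeriv f z - ∑ γ ∈ S, (m γ : ℂ) * (z / (z ^ 2 + (γ : ℝ) ^ 2)) =
      (logDeriv g z - logDeriv g (-z)) / 2 := by
    rw [hsum]; linear_combination (1/2) * e1 - (1/2) * e2
  rw [hfin, norm_div]
  have : ‖z - -z‖ = 2 * ‖z‖ := by
    rw [sub_neg_eq_add, ← two_mul, norm_mul]; simp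
  rw [this] at hmain
  rw [div_le_iff₀ (by simp)]
  refine hmain.trans (le_of_eq ?_)
  simp only [RCLike.norm_ofNat]
  ring

/-- `z ^ 2 + γ ^ 2` is comparable with `1 + γ ^ 2` in the right half plane, uniformly in `γ`. -/
lemma one_add_sq_le (z : ℂ) (hz : 0 < z.re) (γ : ℝ) :
    1 + γ ^ 2 ≤ ((2 + 2 * ‖z‖ ^ 2) / z.re ^ 2 + 2) * ‖z ^ 2 + (γ : ℂ) ^ 2‖ := by
  have h0 : 0 ≤ ‖z ^ 2 + (γ : ℂ) ^ 2‖ := norm_nonneg _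
  have hre2 : 0 < z.re ^ 2 := by positivity
  rcases le_total (γ ^ 2) (2 * ‖z‖ ^ 2 + 1) with h | h
  · have h1 : z.re ^ 2 ≤ ‖z ^ 2 + (γ : ℂ) ^ 2‖ := by
      have : z ^ 2 + (γ : ℂ) ^ 2 = (z - γ * I) * (z + γ * I) := by
        ring_nf; simp
      rw [this, norm_mul, sq]
      have a1 := abs_re_le_norm (z - γ * I)
      have a2 := abs_re_le_norm (z + γ * I)
      simp at a1 a2
      rw [abs_of_pos hz] at a1 a2
      gcongr
    have : 1 + γ ^ 2 ≤ (2 + 2 * ‖z‖ ^ 2) / z.re ^ 2 * ‖z ^ 2 + (γ : ℂ) ^ 2‖ := by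
      calc 1 + γ ^ 2 ≤ (2 + 2 * ‖z‖ ^ 2) / z.re ^ 2 * z.re ^ 2 := by
            rw [div_mul_cancel₀ _ hre2.ne']; linarith
        _ ≤ _ := by gcongr
    nlinarith
  · have h1 : γ ^ 2 - ‖z‖ ^ 2 ≤ ‖z ^ 2 + (γ : ℂ) ^ 2‖ := by
      have := norm_sub_norm_le ((γ : ℂ) ^ 2) (-z ^ 2)
      simp only [norm_neg, norm_pow, norm_real, Real.norm_eq_abs, sq_abs, sub_neg_eq_add] at this
      rwa [add_comm] at this
    have : 0 ≤ (2 + 2 * ‖z‖ ^ 2) / z.re ^ 2 * ‖z ^ 2 + (γ : ℂ) ^ 2‖ := by positivity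
    nlinarith

include heven hM hlim in
lemma tendsto_sum_zeros {z : ℂ} (hz : 0 < z.re) :
    Tendsto (fun r => ∑ γ ∈
      (finite_zeros hf (w := 1) (fun h => by simpa using hzero 1 h) r).toFinset,
      (analyticOrderNatAt f ((γ : ℝ) * I) : ℂ) * (z / (z ^ 2 + (γ : ℝ) ^ 2)))
      atTop (𝓝 (logDeriv f z)) := by
  rw [tendsto_iff_norm_sub_tendsto_zero]
  have hB : Tendsto (fun r : ℝ => 128 * ((|M (3 * r)| + |Real.log ‖f 1‖| + 1) / r ^ 2) * ‖z‖)
      atTop (𝓝 0) := by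
    have h1 : Tendsto (fun r : ℝ => |M (3 * r)| / r ^ 2) atTop (𝓝 0) := by
      have h2 : Tendsto (fun r : ℝ => 3 * r) atTop atTop :=
        tendsto_id.const_mul_atTop (by norm_num)
      have h3 := ((hlim.comp h2).abs.const_mul 9)
      simp only [abs_zero, mul_zero] at h3
      refine h3.congr fun r => ?_
      simp only [Function.comp, abs_div, abs_of_nonneg (sq_nonneg (3 * r))]
      rcases eq_or_ne r 0 with rfl | hr
      · simp
      · field_simp; norm_num
    have h2 : Tendsto (fun r : ℝ => (|Real.log ‖f 1‖| + 1) / r ^ 2) atTop (𝓝 0) :=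
      tendsto_const_nhds.div_atTop (tendsto_pow_atTop (by norm_num))
    have h3 := ((h1.add h2).const_mul 128).mul_const ‖z‖
    simp only [add_zero, mul_zero, zero_mul] at h3
    refine h3.congr fun r => ?_
    ring
  refine squeeze_zero' (Eventually.of_forall fun _ => norm_nonneg _) ?_ hB
  filter_upwards [eventually_ge_atTop 1, eventually_gt_atTop (4 * (‖z‖ + 1))] with r hr1 hr2
  rw [norm_sub_rev]
  exact norm_logDeriv_sub_sum_le hf heven hzero hM hz hr1 (by linarith)

include hf hzero in
lemma tendsto_zeros_finset : Tendsto (fun r =>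
      (finite_zeros hf (w := 1) (fun h => by simpa using hzero 1 h) r).toFinset) atTop atTop := by
  refine Filter.tendsto_atTop_finset_of_monotone ?_ ?_
  · intro a b hab γ hγ
    simp only [Set.Finite.mem_toFinset, Set.mem_ofPred_eq] at hγ ⊢
    exact hγ.trans hab
  · intro γ
    exact ⟨‖(γ : ℂ) * I - 1‖, by simp⟩

include hf heven hzero hM hlim in
lemma summable_zeros : Summable (fun γ : {γ : ℝ // f (γ * I) = 0} =>
    (analyticOrderNatAt f ((γ : ℝ) * I) : ℝ) / (1 + (γ : ℝ) ^ 2)) := by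
  have ht := tendsto_sum_zeros hf heven hzero hM hlim (z := 1) (by simp)
  have htre : Tendsto (fun r => ∑ γ ∈
      (finite_zeros hf (w := 1) (fun h => by simpa using hzero 1 h) r).toFinset,
      (analyticOrderNatAt f ((γ : ℝ) * I) : ℝ) / (1 + (γ : ℝ) ^ 2))
      atTop (𝓝 (logDeriv f 1).re) := by
    refine ((continuous_re.tendsto _).comp ht).congr fun r => ?_
    simp only [Function.comp, re_sum]
    refine Finset.sum_congr rfl fun γ _ => ?_
    rw [← ofReal_re ((analyticOrderNatAt f ((γ : ℝ) * I) : ℝ) / (1 + (γ : ℝ) ^ 2))]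
    push_cast
    congr 1
    ring
  refine summable_of_sum_le (c := (logDeriv f 1).re) (fun γ => ?_) fun T => ?_
  · simp only [Pi.zero_apply]; positivity
  refine ge_of_tendsto htre ?_
  filter_upwards [(tendsto_zeros_finset hf hzero).eventually (eventually_ge_atTop T)] with r hr
  exact Finset.sum_le_sum_of_subset_of_nonneg hr fun _ _ _ => by positivity

include hf heven hzero hM hlim in
/-- Partial fraction expansion of the logarithmic derivative of an even entire function `f` with
`log ‖f z‖ ≤ o(‖z‖ ^ 2)` whose zeros `iγ` are all purely imaginary. -/
theorem hasSum_logDeriv {z : ℂ} (hz : 0 < z.re) :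
    HasSum (fun γ : {γ : ℝ // f (γ * I) = 0} =>
      (analyticOrderNatAt f ((γ : ℝ) * I) : ℂ) * (z / (z ^ 2 + (γ : ℝ) ^ 2))) (logDeriv f z) := by
  have hs : Summable (fun γ : {γ : ℝ // f (γ * I) = 0} =>
      (analyticOrderNatAt f ((γ : ℝ) * I) : ℂ) * (z / (z ^ 2 + (γ : ℝ) ^ 2))) := by
    refine Summable.of_norm_bounded ((summable_zeros hf heven hzero hM hlim).mul_left
      (((2 + 2 * ‖z‖ ^ 2) / z.re ^ 2 + 2) * ‖z‖)) fun γ => ?_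
    have h1 := one_add_sq_le z hz γ
    have h2 : 0 < 1 + (γ : ℝ) ^ 2 := by positivity
    have h3 : 0 < ‖z ^ 2 + ((γ : ℝ) : ℂ) ^ 2‖ := by
      refine lt_of_le_of_ne (norm_nonneg _) fun h => ?_
      rw [← h, mul_zero] at h1; linarith
    rw [norm_mul, norm_div, _root_.norm_natCast]
    set K := (2 + 2 * ‖z‖ ^ 2) / z.re ^ 2 + 2
    rw [mul_div_assoc', mul_div_assoc', div_le_div_iff₀ h3 h2]
    have : 0 ≤ (analyticOrderNatAt f ((γ : ℝ) * I) : ℝ) * ‖z‖ := by positivity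
    nlinarith
  have h1 := hs.hasSum.comp (tendsto_zeros_finset hf hzero)
  have h2 := tendsto_sum_zeros hf heven hzero hM hlim hz
  have := tendsto_nhds_unique h1 h2
  rw [← this]
  exact hs.hasSum

end EvenEntire

end MertensRH

/-! ### The centred `ξ`-function: symmetry, zeros and growth -/

namespace MertensRH
open Complex Filter Topology

/-- The Riemann `ξ`-function centred at the symmetry point: `Ξ z = s (s - 1) Λ(s)` with
`s = 1/2 + z`, where `Λ(s) = π^(-s/2) Γ(s/2) ζ(s)`; written via `Λ₀` so that it is visibly entire. -/
noncomputable def Xi (z : ℂ) : ℂ :=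
  (1 / 2 + z) * ((1 / 2 + z) - 1) * completedRiemannZeta₀ (1 / 2 + z) + 1

lemma differentiable_Xi : Differentiable ℂ Xi := by
  have h1 : Differentiable ℂ fun z : ℂ => completedRiemannZeta₀ (1 / 2 + z) :=
    differentiable_completedZeta₀.comp (by fun_prop)
  unfold Xi
  fun_prop

lemma Xi_neg (z : ℂ) : Xi (-z) = Xi z := by
  unfold Xi
  have : (1 / 2 + -z) = 1 - (1 / 2 + z) := by ring
  rw [this, completedRiemannZeta₀_one_sub]
  ring

lemma Xi_eq {s : ℂ} (h0 : s ≠ 0) (h1 : s ≠ 1) :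
    Xi (s - 1 / 2) = s * (s - 1) * completedRiemannZeta s := by
  unfold Xi
  have : 1 / 2 + (s - 1 / 2) = s := by ring
  rw [this, completedRiemannZeta_eq]
  have : 1 - s ≠ 0 := sub_ne_zero.2 h1.symm
  field_simp
  ring

lemma Xi_ne_zero_of_one_le {s : ℂ} (hs : 1 ≤ s.re) : Xi (s - 1 / 2) ≠ 0 := by
  by_cases h1 : s = 1
  · subst h1; unfold Xi; norm_num
  have h0 : s ≠ 0 := by rintro rfl; norm_num at hs
  rw [Xi_eq h0 h1]
  have := riemannZeta_ne_zero_of_one_le_re hs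
  rw [riemannZeta_def_of_ne_zero h0] at this
  have h2 : completedRiemannZeta s ≠ 0 := fun h => this (by simp [h])
  exact mul_ne_zero (mul_ne_zero h0 (sub_ne_zero.2 h1)) h2

/-- Under the Riemann Hypothesis all zeros of `Ξ` are purely imaginary. -/
lemma Xi_zero (hRH : RiemannHypothesis) (z : ℂ) (hz : Xi z = 0) : z.re = 0 := by
  have key : ∀ z : ℂ, Xi z = 0 → 0 ≤ z.re → z.re = 0 := by
    intro z hz hre
    by_contra hne
    set s := z + 1 / 2 with hs
    have hzs : z = s - 1 / 2 := by rw [hs]; ring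
    have hsre : s.re = z.re + 1 / 2 := by simp [hs]
    have h12 : (1:ℝ) / 2 < s.re := by
      rw [hsre]; have := lt_of_le_of_ne hre (Ne.symm hne); linarith
    have hlt : s.re < 1 := by
      by_contra h
      exact Xi_ne_zero_of_one_le (not_lt.1 h) (hzs ▸ hz)
    have h0 : s ≠ 0 := by intro h; rw [h] at h12; norm_num at h12
    have h1 : s ≠ 1 := by intro h; rw [h] at hlt; norm_num at hlt
    have hL : completedRiemannZeta s = 0 := by
      rw [hzs, Xi_eq h0 h1] at hz
      exact (mul_eq_zero.1 hz).resolve_left (mul_ne_zero h0 (sub_ne_zero.2 h1))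
    have hzeta : riemannZeta s = 0 := by rw [riemannZeta_def_of_ne_zero h0, hL, zero_div]
    have := hRH s hzeta ?_ h1
    · linarith
    · rintro ⟨n, hn⟩
      have := congrArg re hn
      simp at this
      have hn0 : (0:ℝ) ≤ n := Nat.cast_nonneg n
      linarith
  rcases le_total 0 z.re with h | h
  · exact key z hz h
  · have := key (-z) (by rwa [Xi_neg]) (by simpa using h)
    simpa using this

lemma norm_zeta_le {s : ℂ} (hs : 2 ≤ s.re) : ‖riemannZeta s‖ ≤ ‖riemannZeta 2‖ := by
  have h1 : (1:ℝ) < s.re := by linarith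
  rw [zeta_eq_tsum_one_div_nat_add_one_cpow h1,
    zeta_eq_tsum_one_div_nat_add_one_cpow (s := 2) (by norm_num)]
  have hsum : Summable (fun n : ℕ => 1 / ((n:ℝ) + 1) ^ (2:ℝ)) := by
    have := (summable_nat_add_iff 1).2 (Real.summable_one_div_nat_rpow.2 (by norm_num : (1:ℝ) < 2))
    simpa using this
  have e2 : ∀ n : ℕ, 1 / ((n:ℂ) + 1) ^ (2:ℂ) = ((1 / ((n:ℝ) + 1) ^ (2:ℝ) : ℝ) : ℂ) := by
    intro n
    have : (0:ℝ) ≤ (n:ℝ) + 1 := by positivity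
    rw [ofReal_div, ofReal_cpow this]; push_cast; rfl
  simp_rw [e2]
  rw [← ofReal_tsum, norm_real, Real.norm_of_nonneg (tsum_nonneg fun _ => by positivity)]
  refine tsum_of_norm_bounded hsum.hasSum fun n => ?_
  have hn : (0:ℝ) < (n:ℝ) + 1 := by positivity
  have : ((n:ℂ) + 1) = (((n:ℝ) + 1 : ℝ) : ℂ) := by push_cast; rfl
  rw [norm_div, this, norm_cpow_eq_rpow_re_of_pos hn, norm_one]
  gcongr
  linarith

lemma mul_log_mono {a b : ℝ} (ha : 1 ≤ a) (hab : a ≤ b) : a * Real.log a ≤ b * Real.log b :=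
  mul_le_mul hab (Real.log_le_log (by linarith) hab) (Real.log_nonneg ha) (by linarith)

lemma Gamma_le {x : ℝ} (hx : 1 ≤ x) : Real.Gamma x ≤ Real.exp ((x + 2) * Real.log (x + 2)) := by
  set n := ⌈x⌉₊ with hn
  have h1 : x ≤ n := Nat.le_ceil x
  have h2 : (n:ℝ) < x + 1 := Nat.ceil_lt_add_one (by linarith)
  have h3 : Real.Gamma (x + 1) ≤ Real.Gamma (n + 1) :=
    Real.Gamma_strictMonoOn_Ici.monotoneOn (by simp; linarith) (by simp; linarith) (by linarith)
  rw [Real.Gamma_nat_eq_factorial, Real.Gamma_add_one (by linarith)] at h3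
  have h4 : Real.Gamma x ≤ x * Real.Gamma x := by
    have := (Real.Gamma_pos_of_pos (by linarith : 0 < x)).le
    nlinarith
  have h5 : (n.factorial : ℝ) ≤ (n:ℝ) ^ n := by exact_mod_cast Nat.factorial_le_pow n
  refine (h4.trans (h3.trans h5)).trans ?_
  have hnpos : (0:ℝ) < n := by linarith
  rw [← Real.rpow_natCast, Real.rpow_def_of_pos hnpos, mul_comm]
  apply Real.exp_le_exp.2
  have : 0 ≤ Real.log (x + 2) := Real.log_nonneg (by linarith)
  gcongr <;> linarith

lemma norm_Gamma_le {s : ℂ} (hs : 0 < s.re) : ‖Gamma s‖ ≤ Real.Gamma s.re := by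
  rw [Gamma_eq_integral hs, Real.Gamma_eq_integral hs, GammaIntegral]
  refine (MeasureTheory.norm_integral_le_integral_norm _).trans (le_of_eq ?_)
  refine MeasureTheory.setIntegral_congr_fun measurableSet_Ioi fun x hx => ?_
  have hx : 0 < x := hx
  simp only [norm_mul]
  rw [norm_cpow_eq_rpow_re_of_pos hx, norm_real, Real.norm_of_nonneg (Real.exp_pos _).le]
  simp

/-- `Λ` in the half plane `Re s ≥ 2`. -/
lemma norm_completedZeta_le {s : ℂ} (hs : 2 ≤ s.re) :
    ‖completedRiemannZeta s‖ ≤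
      ‖riemannZeta 2‖ * Real.exp ((s.re + 2) * Real.log (s.re + 2)) := by
  have h0 : s ≠ 0 := by rintro rfl; norm_num at hs
  have hG : Gammaℝ s ≠ 0 := Gammaℝ_ne_zero_of_re_pos (by linarith)
  have h1 : completedRiemannZeta s = riemannZeta s * Gammaℝ s := by
    rw [riemannZeta_def_of_ne_zero h0]; field_simp
  rw [h1, norm_mul]
  refine mul_le_mul (norm_zeta_le hs) ?_ (norm_nonneg _) (norm_nonneg _)
  rw [Gammaℝ_def, norm_mul]
  have h2 : ‖(Real.pi : ℂ) ^ (-s / 2)‖ ≤ 1 := by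
    rw [norm_cpow_eq_rpow_re_of_pos Real.pi_pos]
    apply Real.rpow_le_one_of_one_le_of_nonpos
    · linarith [Real.pi_gt_three]
    · simp; linarith
  have hre : (s / 2).re = s.re / 2 := by simp
  have h3 : ‖Gamma (s / 2)‖ ≤ Real.exp ((s.re + 2) * Real.log (s.re + 2)) := by
    refine (norm_Gamma_le (by rw [hre]; linarith)).trans ?_
    rw [hre]
    refine (Gamma_le (by linarith)).trans (Real.exp_le_exp.2 ?_)
    exact mul_log_mono (by linarith) (by linarith)
  exact (mul_le_of_le_one_left (norm_nonneg _) h2).trans h3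

/-- Vertical strips: `Λ₀` is a Mellin transform converging everywhere. -/
lemma exists_bound_strip (a b : ℝ) : ∃ C : ℝ, ∀ s : ℂ, a ≤ s.re → s.re ≤ b →
    ‖completedRiemannZeta₀ s‖ ≤ C := by
  set P := HurwitzZeta.hurwitzEvenFEPair 0 with hP
  have hconv : ∀ s : ℂ, MellinConvergent P.f_modif s :=
    fun s => (P.isStrongFEPair_toStrongFEPair.hasMellin s).1
  have hreal : ∀ σ : ℝ, MeasureTheory.IntegrableOn (fun t : ℝ => t ^ (σ - 1) * ‖P.f_modif t‖)
      (Set.Ioi 0) := by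
    intro σ
    refine MeasureTheory.IntegrableOn.congr_fun (hconv σ).norm (fun t ht => ?_) measurableSet_Ioi
    have ht : 0 < t := ht
    simp only [norm_smul]
    rw [norm_cpow_eq_rpow_re_of_pos ht]; simp
  set C := ∫ t in Set.Ioi (0:ℝ), (t ^ (a / 2 - 1) * ‖P.f_modif t‖ + t ^ (b / 2 - 1) * ‖P.f_modif t‖)
  refine ⟨C, fun s ha hb => ?_⟩
  have hval : completedRiemannZeta₀ s = mellin P.f_modif (s / 2) / 2 := rfl
  rw [hval, norm_div]
  have h1 : ‖mellin P.f_modif (s / 2)‖ ≤ C := by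
    refine MeasureTheory.norm_integral_le_of_norm_le ((hreal (a / 2)).add (hreal (b / 2))) ?_
    filter_upwards [MeasureTheory.ae_restrict_mem measurableSet_Ioi] with t ht
    have ht : 0 < t := ht
    rw [norm_smul, norm_cpow_eq_rpow_re_of_pos ht]
    change _ ≤ t ^ (a / 2 - 1) * ‖P.f_modif t‖ + t ^ (b / 2 - 1) * ‖P.f_modif t‖
    rw [← add_mul]
    gcongr
    have hre : (s / 2 - 1).re = s.re / 2 - 1 := by simp
    rw [hre]
    rcases le_total t 1 with h | h
    · have := Real.rpow_le_rpow_of_exponent_ge ht h (by linarith : a / 2 - 1 ≤ s.re / 2 - 1)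
      have := Real.rpow_nonneg ht.le (b / 2 - 1)
      linarith
    · have := Real.rpow_le_rpow_of_exponent_le h (by linarith : s.re / 2 - 1 ≤ b / 2 - 1)
      have := Real.rpow_nonneg ht.le (a / 2 - 1)
      linarith
  have := norm_nonneg (mellin P.f_modif (s / 2))
  simp only [RCLike.norm_ofNat]
  linarith

lemma exists_bound_completedZeta₀ : ∃ C : ℝ, 0 ≤ C ∧ ∀ s : ℂ,
    ‖completedRiemannZeta₀ s‖ ≤ C * Real.exp ((‖s‖ + 3) * Real.log (‖s‖ + 3)) := by
  obtain ⟨C, hC⟩ := exists_bound_strip (-1) 2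
  have key : ∀ s : ℂ, -1 ≤ s.re → ‖completedRiemannZeta₀ s‖ ≤
      (|C| + ‖riemannZeta 2‖ + 2) * Real.exp ((‖s‖ + 2) * Real.log (‖s‖ + 2)) := by
    intro s hs
    have hlog : 0 ≤ Real.log (‖s‖ + 2) := Real.log_nonneg (by linarith [norm_nonneg s])
    have hE : 1 ≤ Real.exp ((‖s‖ + 2) * Real.log (‖s‖ + 2)) := Real.one_le_exp (by positivity)
    have hz : 0 ≤ ‖riemannZeta 2‖ := norm_nonneg _
    have hCa : 0 ≤ |C| := abs_nonneg _
    rcases le_total s.re 2 with h | h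
    · have h1 := hC s hs h
      have := le_abs_self C
      nlinarith
    · have h1 := norm_completedZeta_le h
      have hsr := re_le_norm s
      have h2 : Real.exp ((s.re + 2) * Real.log (s.re + 2)) ≤
          Real.exp ((‖s‖ + 2) * Real.log (‖s‖ + 2)) := by
        apply Real.exp_le_exp.2
        have : 0 ≤ Real.log (s.re + 2) := Real.log_nonneg (by linarith)
        gcongr
      have h3 : completedRiemannZeta₀ s = completedRiemannZeta s + 1 / s + 1 / (1 - s) := by
        rw [completedRiemannZeta_eq]; ring
      have h4 : ‖1 / s‖ ≤ 1 := by
        rw [norm_div, norm_one]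
        exact div_le_one_of_le₀ (by linarith) (norm_nonneg _)
      have h5 : ‖1 / (1 - s)‖ ≤ 1 := by
        rw [norm_div, norm_one]
        refine div_le_one_of_le₀ ?_ (norm_nonneg _)
        have := abs_re_le_norm (1 - s)
        simp at this
        have := neg_abs_le (1 - s.re)
        linarith
      have h6 : ‖completedRiemannZeta₀ s‖ ≤ ‖completedRiemannZeta s‖ + ‖1 / s‖ + ‖1 / (1 - s)‖ := by
        rw [h3]; exact norm_add₃_le
      nlinarith [mul_le_mul_of_nonneg_left h2 hz]
  refine ⟨|C| + ‖riemannZeta 2‖ + 2, by positivity, fun s => ?_⟩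
  rcases le_total (-1) s.re with h | h
  · refine (key s h).trans ?_
    have : 0 ≤ Real.log (‖s‖ + 2) := Real.log_nonneg (by linarith [norm_nonneg s])
    gcongr <;> norm_num
  · have h1 := key (1 - s) (by simp; linarith)
    rw [completedRiemannZeta₀_one_sub] at h1
    refine h1.trans ?_
    have h2 : ‖1 - s‖ ≤ 1 + ‖s‖ := (norm_sub_le _ _).trans (by simp)
    have h3 := mul_log_mono (by linarith [norm_nonneg (1 - s)] : 1 ≤ ‖1 - s‖ + 2)
      (by linarith : ‖1 - s‖ + 2 ≤ ‖s‖ + 3)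
    gcongr

/-- `Ξ` has order at most one: `log ‖Ξ z‖ ≤ O(‖z‖ log ‖z‖)`. -/
lemma exists_bound_Xi : ∃ M : ℝ → ℝ, (∀ r z, ‖z‖ ≤ r → ‖Xi z‖ ≤ Real.exp (M r)) ∧
    Tendsto (fun r => M r / r ^ 2) atTop (𝓝 0) := by
  obtain ⟨C, hC0, hC⟩ := exists_bound_completedZeta₀
  refine ⟨fun r => (C + 1) + 3 * ((r + 4) * Real.log (r + 4)), fun r z hz => ?_, ?_⟩
  · have hr : 0 ≤ r := (norm_nonneg z).trans hz
    set s := 1 / 2 + z with hs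
    have hsn : ‖s‖ ≤ r + 1 / 2 := by
      refine (norm_add_le _ _).trans ?_
      norm_num; linarith
    have hs1 : ‖s - 1‖ ≤ r + 2 := (norm_sub_le _ _).trans (by simp; linarith)
    have hlog : 1 ≤ Real.log (r + 4) := by
      rw [Real.le_log_iff_exp_le (by linarith)]
      linarith [Real.exp_one_lt_d9]
    set L := Real.log (r + 4) with hL
    have hexpL : Real.exp L = r + 4 := Real.exp_log (by linarith)
    have h1 : ‖completedRiemannZeta₀ s‖ ≤ C * Real.exp ((r + 4) * L) := by
      refine (hC s).trans ?_
      have := mul_log_mono (by linarith [norm_nonneg s] : 1 ≤ ‖s‖ + 3)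
        (by linarith : ‖s‖ + 3 ≤ r + 4)
      rw [← hL] at this
      gcongr
    have h2 : ‖s‖ ≤ Real.exp ((r + 4) * L) := by
      have : Real.exp L ≤ Real.exp ((r + 4) * L) := Real.exp_le_exp.2 (by nlinarith)
      linarith
    have h3 : ‖s - 1‖ ≤ Real.exp ((r + 4) * L) := by
      have : Real.exp L ≤ Real.exp ((r + 4) * L) := Real.exp_le_exp.2 (by nlinarith)
      linarith
    have hE : 1 ≤ Real.exp ((r + 4) * L) := Real.one_le_exp (by positivity)
    set E := Real.exp ((r + 4) * L)
    calc ‖Xi z‖ ≤ ‖s‖ * ‖s - 1‖ * ‖completedRiemannZeta₀ s‖ + 1 := by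
          unfold Xi; refine (norm_add_le _ _).trans ?_
          rw [norm_mul, norm_mul, norm_one]
      _ ≤ E * E * (C * E) + E * E * E := by
          have : 1 ≤ E * E * E := by nlinarith [mul_self_nonneg E]
          gcongr
      _ = (C + 1) * E ^ 3 := by ring
      _ ≤ Real.exp (C + 1) * E ^ 3 := by
          gcongr; linarith [Real.add_one_le_exp (C + 1)]
      _ = _ := by
          rw [Real.exp_add (C + 1), ← Real.exp_nat_mul]; norm_num; exact Or.inl hL
  · have ht : Tendsto (fun r : ℝ => r + 4) atTop atTop := tendsto_atTop_add_const_right _ _ tendsto_id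
    have h1 : Tendsto (fun r : ℝ => Real.log (r + 4) / (r + 4)) atTop (𝓝 0) :=
      (Real.isLittleO_log_id_atTop.tendsto_div_nhds_zero).comp ht
    have h2 : Tendsto (fun r : ℝ => (r + 4) / r) atTop (𝓝 1) := by
      have : Tendsto (fun r : ℝ => 1 + 4 / r) atTop (𝓝 (1 + 0)) :=
        tendsto_const_nhds.add (tendsto_const_nhds.div_atTop tendsto_id)
      rw [add_zero] at this
      refine this.congr' ?_
      filter_upwards [eventually_gt_atTop 0] with r hr
      field_simp
    have h3 : Tendsto (fun r : ℝ => (C + 1) / r ^ 2) atTop (𝓝 0) :=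
      tendsto_const_nhds.div_atTop (tendsto_pow_atTop (by norm_num))
    have h4 := h3.add (((h2.pow 2).mul h1).const_mul 3)
    simp only [mul_zero, add_zero] at h4
    refine h4.congr' ?_
    filter_upwards [eventually_gt_atTop 0] with r hr
    field_simp

end MertensRH

/-! ### Partial fractions of the digamma function -/

namespace MertensRH
open Complex Filter Topology

/-- The digamma function on the positive real axis, as a real function. -/
noncomputable def psiR (x : ℝ) : ℝ := deriv (Real.log ∘ Real.Gamma) x

lemma hasDerivAt_logGamma {x : ℝ} (hx : 0 < x) :
    HasDerivAt (Real.log ∘ Real.Gamma) (deriv Real.Gamma x / Real.Gamma x) x := by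
  have h1 : DifferentiableAt ℝ Real.Gamma x := Real.differentiableAt_Gamma fun m h => by
    have : (0:ℝ) ≤ m := Nat.cast_nonneg m
    linarith
  exact h1.hasDerivAt.log (Real.Gamma_pos_of_pos hx).ne'

lemma ne_neg_nat {s : ℂ} (hs : 0 < s.re) (m : ℕ) : s ≠ -m := fun h => by
  rw [h] at hs; simp at hs
  have : (0:ℝ) ≤ m := Nat.cast_nonneg m
  linarith

lemma digamma_ofReal {x : ℝ} (hx : 0 < x) : digamma (x : ℂ) = psiR x := by
  have h1 : DifferentiableAt ℝ Real.Gamma x := Real.differentiableAt_Gamma fun m h => by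
    have : (0:ℝ) ≤ m := Nat.cast_nonneg m
    linarith
  have h2 := (differentiableAt_Gamma (x : ℂ) (ne_neg_nat (by simpa using hx))).hasDerivAt.comp_ofReal
  have h3 := h1.hasDerivAt.ofReal_comp
  simp_rw [Gamma_ofReal] at h2
  have h4 := h2.unique h3
  rw [psiR, (hasDerivAt_logGamma hx).deriv, digamma_def, logDeriv_apply, h4, Gamma_ofReal]
  push_cast; rfl

lemma psiR_add_one {x : ℝ} (hx : 0 < x) : psiR (x + 1) = psiR x + 1 / x := by
  have h := digamma_apply_add_one (x : ℂ) (ne_neg_nat (by simpa using hx))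
  have h1 : ((x : ℂ) + 1) = ((x + 1 : ℝ) : ℂ) := by push_cast; rfl
  rw [h1, digamma_ofReal (by linarith), digamma_ofReal hx] at h
  rw [one_div]
  exact_mod_cast h

lemma psiR_mono : MonotoneOn psiR (Set.Ioi 0) :=
  Real.convexOn_log_Gamma.monotoneOn_deriv fun _ hx => (hasDerivAt_logGamma hx).differentiableAt

lemma psiR_le_log {x : ℝ} (hx : 0 < x) : psiR x ≤ Real.log x := by
  have := Real.convexOn_log_Gamma.deriv_le_slope (x := x) (y := x + 1) hx
    (by simp; linarith) (by linarith) (hasDerivAt_logGamma hx).differentiableAt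
  refine this.trans (le_of_eq ?_)
  have hG := Real.Gamma_pos_of_pos hx
  rw [slope_def_field]
  simp only [Function.comp, add_sub_cancel_left, div_one]
  rw [Real.Gamma_add_one hx.ne', Real.log_mul hx.ne' hG.ne']
  ring

/-- The terms of the partial fraction series of `digamma (s + 1)`. -/
noncomputable def pfTerm (n : ℕ) (s : ℂ) : ℂ := 1 / ((n : ℂ) + 1) - 1 / (s + n + 1)

lemma norm_pfTerm_le {s : ℂ} (hs : 0 < s.re) (n : ℕ) :
    ‖pfTerm n s‖ ≤ ‖s‖ * (1 / ((n : ℝ) + 1) ^ 2) := by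
  have h1 : (n:ℝ) + 1 ≤ ‖s + n + 1‖ := by
    have := re_le_norm (s + n + 1)
    simp at this; linarith
  have hn : (0:ℝ) < (n:ℝ) + 1 := by positivity
  have hne : s + n + 1 ≠ 0 := norm_pos_iff.1 (by linarith)
  have hne' : (n:ℂ) + 1 ≠ 0 := by exact_mod_cast hn.ne'
  have h2 : pfTerm n s = s / (((n:ℂ) + 1) * (s + n + 1)) := by
    unfold pfTerm; field_simp; ring
  have h3 : ‖(n:ℂ) + 1‖ = (n:ℝ) + 1 := by
    rw [show (n:ℂ) + 1 = (((n:ℝ) + 1 : ℝ) : ℂ) by push_cast; rfl, norm_real,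
      Real.norm_of_nonneg hn.le]
  rw [h2, norm_div, norm_mul, h3, mul_one_div, sq]
  gcongr

lemma summable_inv_sq : Summable fun n : ℕ => 1 / ((n : ℝ) + 1) ^ 2 := by
  have := (summable_nat_add_iff 1).2 (Real.summable_one_div_nat_pow.2 (by norm_num : 1 < 2))
  simpa using this

lemma summable_pfTerm {s : ℂ} (hs : 0 < s.re) : Summable fun n => pfTerm n s :=
  Summable.of_norm_bounded (summable_inv_sq.mul_left ‖s‖) (norm_pfTerm_le hs)

lemma pfTerm_ofReal (n : ℕ) (x : ℝ) :
    pfTerm n x = ((1 / ((n:ℝ) + 1) - 1 / (x + n + 1) : ℝ) : ℂ) := by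
  unfold pfTerm; push_cast; rfl

lemma differentiableOn_pf : DifferentiableOn ℂ (fun s => ∑' n, pfTerm n s) {s | 0 < s.re} := by
  intro s hs
  have hs : 0 < s.re := hs
  have hU : IsOpen ({s : ℂ | 0 < s.re} ∩ Metric.ball 0 (‖s‖ + 1)) :=
    (isOpen_lt continuous_const continuous_re).inter Metric.isOpen_ball
  have := differentiableOn_tsum_of_summable_norm (F := pfTerm) (U := {s | 0 < s.re} ∩ Metric.ball 0 (‖s‖ + 1))
    (summable_inv_sq.mul_left (‖s‖ + 1)) (fun n w hw => ?_) hU (fun n w hw => ?_)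
  · exact (this.differentiableAt (hU.mem_nhds ⟨hs, by simp⟩)).differentiableWithinAt
  · have hw1 : 0 < w.re := hw.1
    have : w + n + 1 ≠ 0 := fun h => by
      have := congrArg re h
      simp at this
      have h0 : (0:ℝ) ≤ n := Nat.cast_nonneg n
      linarith
    unfold pfTerm
    have h1 : DifferentiableAt ℂ (fun s : ℂ => 1 / (s + n + 1)) w := by fun_prop (disch := exact this)
    exact (h1.const_sub _).differentiableWithinAt
  · have h2 : ‖w‖ < ‖s‖ + 1 := by simpa using hw.2
    refine (norm_pfTerm_le hw.1 n).trans ?_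
    gcongr

/-- The partial fraction series on the positive reals. -/
noncomputable def pfR (x : ℝ) : ℝ := ∑' n : ℕ, (1 / ((n:ℝ) + 1) - 1 / (x + n + 1))

lemma summable_pfR {x : ℝ} (hx : 0 < x) :
    Summable fun n : ℕ => (1 / ((n:ℝ) + 1) - 1 / (x + n + 1)) := by
  have := summable_pfTerm (s := x) (by simpa using hx)
  simp_rw [pfTerm_ofReal] at this
  exact_mod_cast this

lemma pf_ofReal (x : ℝ) : ∑' n, pfTerm n x = pfR x := by
  simp_rw [pfTerm_ofReal, pfR, ofReal_tsum]

lemma pfR_mono : MonotoneOn pfR (Set.Ioi 0) := by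
  intro x hx y hy hxy
  have hx : 0 < x := hx
  refine (summable_pfR hx).tsum_le_tsum (fun n => ?_) (summable_pfR hy)
  gcongr

lemma pfR_add_one {x : ℝ} (hx : 0 < x) : pfR (x + 1) = pfR x + 1 / (x + 1) := by
  have h1 := (summable_pfR hx).hasSum.tendsto_sum_nat
  have h2 := (summable_pfR (by linarith : 0 < x + 1)).hasSum.tendsto_sum_nat
  have h3 : ∀ N : ℕ, ∑ n ∈ Finset.range N, (1 / ((n:ℝ) + 1) - 1 / (x + 1 + n + 1)) =
      ∑ n ∈ Finset.range N, (1 / ((n:ℝ) + 1) - 1 / (x + n + 1)) + (1 / (x + 1) - 1 / (x + N + 1)) := by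
    intro N
    induction N with
    | zero => simp
    | succ N ih =>
      rw [Finset.sum_range_succ, Finset.sum_range_succ, ih]
      push_cast
      have : x + 1 + (N:ℝ) + 1 = x + (N + 1) + 1 := by ring
      rw [this]
      ring
  have h4 : Tendsto (fun N : ℕ => 1 / (x + 1) - 1 / (x + (N:ℝ) + 1)) atTop (𝓝 (1 / (x + 1) - 0)) := by
    refine tendsto_const_nhds.sub (tendsto_const_nhds.div_atTop ?_)
    exact tendsto_atTop_add_const_right _ _ (tendsto_atTop_add_const_left _ _ tendsto_natCast_atTop_atTop)
  rw [sub_zero] at h4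
  refine tendsto_nhds_unique h2 ((h1.add h4).congr fun N => ?_)
  rw [h3]

/-- `x ↦ ψ (x + 1) - ∑ (1 / (n + 1) - 1 / (x + n + 1))` is `1`-periodic and a difference of two
monotone functions with equal and vanishing increments, hence constant on the positive reals. -/
lemma exists_const_real : ∃ C : ℝ, ∀ x : ℝ, 0 < x → psiR (x + 1) = pfR x + C := by
  have hper : ∀ x : ℝ, 0 < x → psiR (x + 1 + 1) - pfR (x + 1) = psiR (x + 1) - pfR x := by
    intro x hx
    rw [psiR_add_one (by linarith), pfR_add_one hx]; ring
  have hpern : ∀ n : ℕ, ∀ x : ℝ, 0 < x → psiR (x + n + 1) - pfR (x + n) = psiR (x + 1) - pfR x := by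
    intro n
    induction n with
    | zero => intro x _; simp
    | succ n ih =>
      intro x hx
      have hn : (0:ℝ) ≤ n := Nat.cast_nonneg n
      have := hper (x + n) (by linarith)
      push_cast
      rw [← ih x hx, ← this]; ring_nf
  have key : ∀ x : ℝ, 1 ≤ x → x ≤ 2 → psiR (x + 1) - pfR x = psiR (1 + 1) - pfR 1 := by
    intro x h1 h2
    rw [← sub_eq_zero, ← abs_eq_zero]
    refine le_antisymm ?_ (abs_nonneg _)
    have ht : Tendsto (fun n : ℕ => 1 / ((1:ℝ) + n + 1)) atTop (𝓝 0) := by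
      refine tendsto_const_nhds.div_atTop ?_
      exact tendsto_atTop_add_const_right _ _ (tendsto_atTop_add_const_left _ _ tendsto_natCast_atTop_atTop)
    refine ge_of_tendsto' ht fun n => ?_
    have hn : (0:ℝ) ≤ n := Nat.cast_nonneg n
    rw [← hpern n x (by linarith), ← hpern n 1 (by linarith)]
    have a1 : psiR (1 + n + 1) ≤ psiR (x + n + 1) :=
      psiR_mono (by simp; linarith) (by simp; linarith) (by linarith)
    have a2 : psiR (x + n + 1) ≤ psiR (1 + n + 1 + 1) :=
      psiR_mono (by simp; linarith) (by simp; linarith) (by linarith)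
    have b1 : pfR (1 + n) ≤ pfR (x + n) :=
      pfR_mono (by simp; linarith) (by simp; linarith) (by linarith)
    have b2 : pfR (x + n) ≤ pfR (1 + n + 1) :=
      pfR_mono (by simp; linarith) (by simp; linarith) (by linarith)
    rw [psiR_add_one (by linarith : 0 < 1 + (n:ℝ) + 1)] at a2
    rw [pfR_add_one (by linarith)] at b2
    rw [abs_le]; constructor <;> linarith
  refine ⟨psiR (1 + 1) - pfR 1, fun x hx => ?_⟩
  have : psiR (x + 1) - pfR x = psiR (1 + 1) - pfR 1 := by
    set n := ⌈x⌉₊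
    have hn1 : x ≤ n := Nat.le_ceil x
    have hn2 : (n:ℝ) < x + 1 := Nat.ceil_lt_add_one hx.le
    have hn0 : 0 < n := Nat.ceil_pos.2 hx
    have hnn : (1:ℝ) ≤ n := by exact_mod_cast hn0
    have e1 := hpern n (x + 2 - n) (by linarith)
    have e2 := hpern 2 x hx
    have e3 := key (x + 2 - n) (by linarith) (by linarith)
    rw [← e2, ← e3, ← e1]
    push_cast; ring_nf
  linarith

/-- Partial fractions of the digamma function in the right half plane, up to a constant. -/
lemma exists_digamma_expansion : ∃ C : ℝ, ∀ s : ℂ, 0 < s.re →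
    HasSum (fun n => pfTerm n s) (digamma s + 1 / s - C) := by
  obtain ⟨C, hC⟩ := exists_const_real
  refine ⟨C, fun s hs => ?_⟩
  have hopen : IsOpen {s : ℂ | 0 < s.re} := isOpen_lt continuous_const continuous_re
  have hA : AnalyticOnNhd ℂ (fun s => ∑' n, pfTerm n s) {s | 0 < s.re} :=
    differentiableOn_pf.analyticOnNhd hopen
  have hB : AnalyticOnNhd ℂ (fun s => digamma s + 1 / s - C) {s | 0 < s.re} := by
    refine DifferentiableOn.analyticOnNhd (fun s hs => ?_) hopen
    have hs : 0 < s.re := hs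
    have hs0 : s ≠ 0 := by rintro rfl; simp at hs
    have h1 : DifferentiableOn ℂ Gamma {s | 0 < s.re} := fun w hw =>
      (differentiableAt_Gamma w (ne_neg_nat hw)).differentiableWithinAt
    have h2 : DifferentiableAt ℂ (deriv Gamma) s :=
      ((h1.analyticOnNhd hopen) s hs).deriv.differentiableAt
    have h3 : DifferentiableAt ℂ digamma s :=
      h2.div (differentiableAt_Gamma s (ne_neg_nat hs)) (Gamma_ne_zero (ne_neg_nat hs))
    exact ((h3.add ((differentiableAt_const _).div differentiableAt_id hs0)).sub_const _).differentiableWithinAt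
  have hreal : ∀ x : ℝ, 0 < x → ∑' n, pfTerm n x = digamma x + 1 / x - C := by
    intro x hx
    rw [pf_ofReal, digamma_ofReal hx]
    have h1 := hC x hx
    rw [psiR_add_one hx] at h1
    have : pfR x = psiR x + 1 / x - C := by linarith
    rw [this]; push_cast; rfl
  have hconv : Convex ℝ {s : ℂ | 0 < s.re} := convex_halfSpace_re_gt 0
  have hfreq : ∃ᶠ z : ℂ in 𝓝[≠] 1, ∑' n, pfTerm n z = digamma z + 1 / z - C := by
    have h1 : Tendsto (fun x : ℝ => (x : ℂ)) (𝓝[≠] 1) (𝓝[≠] 1) := by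
      refine tendsto_nhdsWithin_iff.2 ⟨?_, ?_⟩
      · exact (continuous_ofReal.tendsto' 1 1 (by simp)).mono_left nhdsWithin_le_nhds
      · filter_upwards [self_mem_nhdsWithin] with x hx
        simpa using hx
    refine h1.frequently (Eventually.frequently ?_)
    filter_upwards [nhdsWithin_le_nhds (lt_mem_nhds (zero_lt_one : (0:ℝ) < 1))] with x hx
    exact hreal x hx
  have := hA.eqOn_of_preconnected_of_frequently_eq hB hconv.isPreconnected
    (by simp : (1:ℂ) ∈ {s : ℂ | 0 < s.re}) hfreq hs
  simp only at this
  rw [← this]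
  exact (summable_pfTerm hs).hasSum

end MertensRH

/-! ### The Mittag-Leffler expansion of `-ζ'/ζ` and a real sum over the zeros -/

namespace MertensRH
open Complex Filter Topology

/-- The ordinates `γ` of the zeros `1/2 + iγ` of `ξ` on the critical line. -/
abbrev Ord := {γ : ℝ // Xi (γ * I) = 0}

/-- The multiplicity of the zero `1/2 + iγ`. -/
noncomputable def mult (γ : ℝ) : ℕ := analyticOrderNatAt Xi (γ * I)

lemma summable_mult (hRH : RiemannHypothesis) :
    Summable fun γ : Ord => (mult γ : ℝ) / (1 + (γ : ℝ) ^ 2) := by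
  obtain ⟨M, hM, hlim⟩ := exists_bound_Xi
  exact summable_zeros differentiable_Xi Xi_neg (Xi_zero hRH) hM hlim

lemma hasSum_Xi (hRH : RiemannHypothesis) {z : ℂ} (hz : 0 < z.re) :
    HasSum (fun γ : Ord => (mult γ : ℂ) * (z / (z ^ 2 + (γ : ℝ) ^ 2))) (logDeriv Xi z) := by
  obtain ⟨M, hM, hlim⟩ := exists_bound_Xi
  exact hasSum_logDeriv differentiable_Xi Xi_neg (Xi_zero hRH) hM hlim hz

lemma logDeriv_Gammaℝ {s : ℂ} (hs : 0 < s.re) :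
    DifferentiableAt ℂ Gammaℝ s ∧
      logDeriv Gammaℝ s = -(Real.log Real.pi : ℂ) / 2 + digamma (s / 2) / 2 := by
  have hpi : (Real.pi : ℂ) ≠ 0 := by exact_mod_cast Real.pi_ne_zero
  have h0 : 0 < (s / 2).re := by simpa using hs
  have hG := (differentiableAt_Gamma (s / 2) (ne_neg_nat h0)).hasDerivAt
  have h1 : HasDerivAt (fun w : ℂ => (Real.pi : ℂ) ^ (-w / 2))
      ((Real.pi : ℂ) ^ (-s / 2) * Complex.log Real.pi * (-1 / 2)) s :=
    (((hasDerivAt_id s).neg).div_const 2).const_cpow (Or.inl hpi)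
  have h2 : HasDerivAt (fun w : ℂ => Gamma (w / 2)) (deriv Gamma (s / 2) * (1 / 2)) s :=
    HasDerivAt.comp s (h₂ := Gamma) hG ((hasDerivAt_id s).div_const 2)
  have h3 := h1.mul h2
  have e : Gammaℝ = (fun w : ℂ => (Real.pi : ℂ) ^ (-w / 2)) * fun w : ℂ => Gamma (w / 2) := by
    ext w; rw [Gammaℝ_def]; rfl
  rw [← e] at h3
  refine ⟨h3.differentiableAt, ?_⟩
  rw [logDeriv_apply, h3.deriv, Gammaℝ_def, digamma_def, logDeriv_apply, ofReal_log Real.pi_pos.le]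
  have hp : (Real.pi : ℂ) ^ (-s / 2) ≠ 0 := by simp [cpow_eq_zero_iff, hpi]
  have hg := Gamma_ne_zero (ne_neg_nat h0)
  field_simp

lemma logDeriv_Xi {s : ℂ} (hs : 1 < s.re) :
    logDeriv Xi (s - 1 / 2) = 1 / s + 1 / (s - 1) + logDeriv Gammaℝ s + logDeriv riemannZeta s := by
  have h0 : s ≠ 0 := by rintro rfl; norm_num at hs
  have h1 : s ≠ 1 := by rintro rfl; norm_num at hs
  have hG0 : Gammaℝ s ≠ 0 := Gammaℝ_ne_zero_of_re_pos (by linarith)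
  have hz0 : riemannZeta s ≠ 0 := riemannZeta_ne_zero_of_one_le_re hs.le
  have hGd := (logDeriv_Gammaℝ (by linarith : 0 < s.re)).1
  have hzd := differentiableAt_riemannZeta h1
  have e : (fun w => Xi (w - 1 / 2)) =ᶠ[𝓝 s]
      (fun w => w * (w - 1) * (Gammaℝ w * riemannZeta w)) := by
    filter_upwards [(isOpen_lt continuous_const continuous_re).mem_nhds hs] with w hw
    have hw : 1 < w.re := hw
    have hw0 : w ≠ 0 := by rintro rfl; norm_num at hw
    have hw1 : w ≠ 1 := by rintro rfl; norm_num at hw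
    have hGw : Gammaℝ w ≠ 0 := Gammaℝ_ne_zero_of_re_pos (by linarith)
    rw [Xi_eq hw0 hw1, riemannZeta_def_of_ne_zero hw0]
    field_simp
  have h2 : logDeriv Xi (s - 1 / 2) = logDeriv (fun w => Xi (w - 1 / 2)) s := by
    rw [logDeriv_apply, logDeriv_apply, deriv_comp_sub_const]
  rw [h2, logDeriv_apply, e.deriv_eq]
  have e' : Xi (s - 1 / 2) = s * (s - 1) * (Gammaℝ s * riemannZeta s) := e.self_of_nhds
  rw [e', ← logDeriv_apply (fun w => w * (w - 1) * (Gammaℝ w * riemannZeta w))]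
  have hs1 : s - 1 ≠ 0 := sub_ne_zero.2 h1
  rw [logDeriv_mul (f := fun w => w * (w - 1)) (g := fun w => Gammaℝ w * riemannZeta w) s
      (mul_ne_zero h0 hs1) (mul_ne_zero hG0 hz0) (by fun_prop) (hGd.mul hzd),
    logDeriv_mul (f := fun w => w) (g := fun w => (w - 1)) s h0 hs1 (by fun_prop) (by fun_prop),
    logDeriv_mul (f := Gammaℝ) (g := riemannZeta) s hG0 hz0 hGd hzd]
  simp only [logDeriv_apply (fun w : ℂ => w), logDeriv_apply (fun w : ℂ => w - 1)]
  simp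
  ring

/-- The von Mangoldt function with complex values. -/
noncomputable abbrev vM : ℕ → ℂ := fun n => (ArithmeticFunction.vonMangoldt n : ℂ)

lemma LSeries_vM {s : ℂ} (hs : 1 < s.re) : LSeries vM s = - logDeriv riemannZeta s := by
  rw [ArithmeticFunction.LSeries_vonMangoldt_eq_deriv_riemannZeta_div hs, logDeriv_apply, neg_div]

/-- The Mittag-Leffler expansion of `-ζ'/ζ` in `Re s > 1`. -/
theorem exists_zeta_identity (hRH : RiemannHypothesis) : ∃ c : ℝ, ∀ s : ℂ, 1 < s.re →
    LSeries vM s = 1 / (s - 1) + c + ∑' n : ℕ, pfTerm n (s / 2) / 2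
      - ∑' γ : Ord, (mult γ : ℂ) * ((s - 1 / 2) / ((s - 1 / 2) ^ 2 + (γ : ℝ) ^ 2)) := by
  obtain ⟨C, hC⟩ := exists_digamma_expansion
  refine ⟨-Real.log Real.pi / 2 + C / 2, fun s hs => ?_⟩
  have h0 : s ≠ 0 := by rintro rfl; norm_num at hs
  have h1 := logDeriv_Xi hs
  rw [(logDeriv_Gammaℝ (by linarith : 0 < s.re)).2] at h1
  have h2 := (hC (s / 2) (by simp; linarith)).div_const 2
  have h3 := hasSum_Xi hRH (z := s - 1 / 2) (by simp; norm_num; linarith)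
  rw [LSeries_vM hs, h2.tsum_eq, h3.tsum_eq, h1]
  push_cast
  field_simp
  ring

lemma logDeriv_zeta_re_nonpos {s : ℝ} (hs : 1 < s) : (logDeriv riemannZeta s).re ≤ 0 := by
  have h1 := LSeries_vM (s := s) (by simpa using hs)
  have h2 : 0 ≤ (LSeries vM s).re := by
    have hsum : LSeriesSummable vM s :=
      ArithmeticFunction.LSeriesSummable_vonMangoldt (by simpa using hs)
    rw [LSeries, Complex.re_tsum hsum]
    refine tsum_nonneg fun n => ?_
    rcases eq_or_ne n 0 with rfl | hn
    · simp
    · rw [LSeries.term_of_ne_zero hn]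
      have : ((n : ℂ) ^ (s : ℂ)) = (((n : ℝ) ^ s : ℝ) : ℂ) := by
        rw [ofReal_cpow (by positivity)]; simp
      rw [this, ← ofReal_div, ofReal_re]
      have := ArithmeticFunction.vonMangoldt_nonneg (n := n)
      positivity
  rw [h1, neg_re] at h2
  linarith

/-- The sum over the zeros is `Ξ'/Ξ` at `a`, which is at most `½ log a + O(1)` because `ζ'/ζ ≤ 0` to
the right of `1` and the digamma function is at most `log`. -/
lemma exists_zero_sum_bound (hRH : RiemannHypothesis) : ∃ C : ℝ, 0 ≤ C ∧ ∀ a : ℝ, 1 ≤ a →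
    ∃ S : ℝ, HasSum (fun γ : Ord => (mult γ : ℝ) * (a / (a ^ 2 + (γ : ℝ) ^ 2))) S ∧
      S ≤ Real.log a / 2 + C := by
  refine ⟨3, by norm_num, fun a ha => ?_⟩
  have h1 := hasSum_Xi hRH (z := a) (by simp; linarith)
  have h2 := Complex.hasSum_re h1
  refine ⟨_, h2.congr_fun fun γ => ?_, ?_⟩
  · rw [← ofReal_re ((mult γ : ℝ) * (a / (a ^ 2 + (γ : ℝ) ^ 2)))]; push_cast; rfl
  · set s : ℝ := a + 1 / 2 with hs
    have h3 := logDeriv_Xi (s := s) (by simp [hs]; linarith)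
    have e1 : (s : ℂ) - 1 / 2 = a := by rw [hs]; push_cast; ring
    rw [e1, (logDeriv_Gammaℝ (by simp [hs]; linarith)).2] at h3
    have e2 : (s : ℂ) / 2 = ((s / 2 : ℝ) : ℂ) := by push_cast; rfl
    rw [e2, digamma_ofReal (by simp [hs]; linarith)] at h3
    have e3 : (1 / (s : ℂ) + 1 / (s - 1) + (-(Real.log Real.pi : ℂ) / 2 + psiR (s / 2) / 2)) =
        ((1 / s + 1 / (s - 1) + (-Real.log Real.pi / 2 + psiR (s / 2) / 2) : ℝ) : ℂ) := by
      push_cast; rfl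
    rw [e3] at h3
    rw [h3, add_re, ofReal_re]
    have b1 := logDeriv_zeta_re_nonpos (s := s) (by linarith)
    have b2 := psiR_le_log (x := s / 2) (by linarith)
    have b3 : 1 / s ≤ 1 := by rw [div_le_one (by linarith)]; linarith
    have b4 : 1 / (s - 1) ≤ 2 := by rw [div_le_iff₀ (by linarith)]; linarith
    have b5 : 0 ≤ Real.log Real.pi := Real.log_nonneg (by linarith [Real.pi_gt_three])
    have b6 : Real.log (s / 2) ≤ Real.log a := Real.log_le_log (by linarith) (by linarith)
    linarith

end MertensRH

/-! ### Laplace transforms -/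

namespace MertensRH
open Complex Filter Topology MeasureTheory
open scoped FourierTransform

/-- `f` is continuous, supported on `[0, ∞)`, bounded by `A * exp (3 * u / 2)`, and `F` is its
Laplace transform on the line `Re s = 2`. -/
structure HasLap (f : ℝ → ℂ) (A : ℝ) (F : ℂ → ℂ) : Prop where
  cont : Continuous f
  zero : ∀ u ≤ 0, f u = 0
  bound : ∀ u, ‖f u‖ ≤ A * Real.exp (3 / 2 * u)
  lap : ∀ s : ℂ, s.re = 2 → ∫ u : ℝ, f u * exp (-s * u) = F s

/-- The dominating function `exp (-u / 2)` on `(0, ∞)`. -/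
noncomputable def domF (u : ℝ) : ℝ := (Set.Ioi (0:ℝ)).indicator (fun u => Real.exp (-(1 / 2) * u)) u

lemma integrable_domF : Integrable domF := by
  unfold domF
  rw [integrable_indicator_iff measurableSet_Ioi]
  exact exp_neg_integrableOn_Ioi 0 (by norm_num)

namespace HasLap

variable {f g : ℝ → ℂ} {A B : ℝ} {F G : ℂ → ℂ}

lemma norm_le (hf : HasLap f A F) {s : ℂ} (hs : s.re = 2) (u : ℝ) :
    ‖f u * exp (-s * u)‖ ≤ A * domF u := by
  unfold domF
  rcases le_or_gt u 0 with h | h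
  · rw [hf.zero u h, Set.indicator_of_notMem (by simpa using h)]; simp
  · rw [Set.indicator_of_mem (by simpa using h), norm_mul, Complex.norm_exp]
    have h1 := hf.bound u
    have h2 : (-s * (u:ℂ)).re = -2 * u := by simp [hs]
    rw [h2]
    calc _ ≤ A * Real.exp (3 / 2 * u) * Real.exp (-2 * u) := by gcongr
      _ = _ := by rw [mul_assoc, ← Real.exp_add]; ring_nf

lemma integrable (hf : HasLap f A F) {s : ℂ} (hs : s.re = 2) :
    Integrable fun u : ℝ => f u * exp (-s * u) := by
  refine (integrable_domF.const_mul A).mono' ?_ (Eventually.of_forall (hf.norm_le hs))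
  have := hf.cont
  exact Continuous.aestronglyMeasurable (by fun_prop)

lemma add (hf : HasLap f A F) (hg : HasLap g B G) : HasLap (f + g) (A + B) (F + G) where
  cont := hf.cont.add hg.cont
  zero u hu := by simp [hf.zero u hu, hg.zero u hu]
  bound u := by
    rw [add_mul]
    exact (norm_add_le _ _).trans (add_le_add (hf.bound u) (hg.bound u))
  lap s hs := by
    simp only [Pi.add_apply, add_mul]
    rw [integral_add (hf.integrable hs) (hg.integrable hs), hf.lap s hs, hg.lap s hs]

lemma const_mul (hf : HasLap f A F) (c : ℂ) :
    HasLap (fun u => c * f u) (‖c‖ * A) (fun s => c * F s) where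
  cont := by have := hf.cont; fun_prop
  zero u hu := by simp [hf.zero u hu]
  bound u := by
    rw [norm_mul, mul_assoc]
    have := hf.bound u
    gcongr
  lap s hs := by
    simp only [mul_assoc]
    rw [integral_const_mul, hf.lap s hs]

lemma congr (hf : HasLap f A F) (h : ∀ s : ℂ, s.re = 2 → F s = G s) : HasLap f A G where
  cont := hf.cont
  zero := hf.zero
  bound := hf.bound
  lap s hs := (hf.lap s hs).trans (h s hs)

lemma tsum {ι : Type*} [Countable ι] {f : ι → ℝ → ℂ} {a : ι → ℝ} {F : ι → ℂ → ℂ}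
    (hf : ∀ i, HasLap (f i) (a i) (F i)) (ha : Summable a) :
    HasLap (fun u => ∑' i, f i u) (∑' i, a i) (fun s => ∑' i, F i s) where
  cont := by
    have h1 : Continuous fun u : ℝ => ∑' i, f i u * Real.exp (-(3 / 2) * u) := by
      refine continuous_tsum (fun i => ?_) ha fun i u => ?_
      · have := (hf i).cont; fun_prop
      · rw [norm_mul, norm_real, Real.norm_of_nonneg (Real.exp_pos _).le]
        calc _ ≤ a i * Real.exp (3 / 2 * u) * Real.exp (-(3 / 2) * u) := by
              gcongr; exact (hf i).bound u
          _ = _ := by rw [mul_assoc, ← Real.exp_add]; ring_nf; simp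
    have h2 : (fun u => ∑' i, f i u) =
        fun u => (∑' i, f i u * Real.exp (-(3 / 2) * u)) * Real.exp (3 / 2 * u) := by
      ext u
      rw [tsum_mul_right, mul_assoc, ← ofReal_mul, ← Real.exp_add]
      ring_nf; simp
    rw [h2]
    fun_prop
  zero u hu := by simp [(hf _).zero u hu]
  bound u := by
    rw [← tsum_mul_right]
    exact tsum_of_norm_bounded (ha.mul_right _).hasSum fun i => (hf i).bound u
  lap s hs := by
    have h1 := hasSum_integral_of_summable_integral_norm (μ := volume)
      (F := fun i (u : ℝ) => f i u * exp (-s * u))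
      (fun i => (hf i).integrable hs) ?_
    · simp_rw [tsum_mul_right] at h1
      rw [← h1.tsum_eq]
      exact tsum_congr fun i => (hf i).lap s hs
    · refine Summable.of_nonneg_of_le (fun i => integral_nonneg fun u => norm_nonneg _) (fun i => ?_)
        (ha.mul_right (∫ u, domF u))
      rw [← integral_const_mul]
      exact integral_mono ((hf i).integrable hs).norm (integrable_domF.const_mul _)
        ((hf i).norm_le hs)

/-- Translation to the right by `l ≥ 0`. -/
lemma shift (hf : HasLap f A F) {l : ℝ} (hl : 0 ≤ l) :
    HasLap (fun u => f (u - l)) (A * Real.exp (-(3 / 2) * l)) (fun s => F s * exp (-s * l)) where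
  cont := by have := hf.cont; fun_prop
  zero u hu := hf.zero _ (by linarith)
  bound u := by
    rw [mul_assoc, ← Real.exp_add]
    refine (hf.bound _).trans (le_of_eq ?_)
    ring_nf
  lap s hs := by
    rw [← hf.lap s hs, ← integral_mul_const,
      ← integral_sub_right_eq_self (fun u : ℝ => f u * exp (-s * u) * exp (-s * l)) l]
    refine integral_congr_ae (Eventually.of_forall fun u => ?_)
    simp only [mul_assoc]
    rw [← Complex.exp_add]
    push_cast
    ring_nf

/-- A Laplace transform vanishing on a vertical line forces the function to vanish. -/
theorem eq_zero (hf : HasLap f A 0) (u : ℝ) : f u = 0 := by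
  have h2 : Integrable fun u : ℝ => f u * exp (-(2:ℂ) * u) := hf.integrable (by simp)
  have hF : 𝓕 (fun u : ℝ => f u * exp (-(2:ℂ) * u)) = 0 := by
    ext w
    rw [Real.fourier_real_eq_integral_exp_smul]
    have := hf.lap (2 + 2 * Real.pi * w * I) (by simp)
    refine Eq.trans (integral_congr_ae (Eventually.of_forall fun v => ?_)) this
    simp only [smul_eq_mul]
    rw [mul_left_comm, ← Complex.exp_add]
    push_cast
    ring_nf
  have hc : Continuous fun u : ℝ => f u * exp (-(2:ℂ) * u) := by
    have := hf.cont; fun_prop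
  have h3 := h2.fourierInv_fourier_eq (by rw [hF]; exact integrable_zero _ _ _) (hc.continuousAt (x := u))
  rw [hF] at h3
  have h4 : 𝓕⁻ (0 : ℝ → ℂ) u = 0 := by
    rw [Real.fourierInv_eq]; simp
  rw [h4] at h3
  exact (mul_eq_zero.1 h3.symm).resolve_right (exp_ne_zero _)

end HasLap

/-- The continuous ramp `max u 0`, with transform `1 / s ^ 2`. -/
noncomputable def ramp (u : ℝ) : ℝ := max u 0

lemma ramp_nonneg (u : ℝ) : 0 ≤ ramp u := le_max_right _ _

lemma ramp_le_exp (u : ℝ) : ramp u ≤ Real.exp (3 / 2 * u) := by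
  unfold ramp
  refine max_le ?_ (Real.exp_pos _).le
  rcases le_total u 0 with h | h
  · exact h.trans (Real.exp_pos _).le
  · linarith [Real.add_one_le_exp (3 / 2 * u)]

lemma integral_of_zero {f : ℝ → ℂ} (h : ∀ u ≤ 0, f u = 0) : ∫ u, f u = ∫ u in Set.Ioi 0, f u := by
  refine (setIntegral_eq_integral_of_forall_compl_eq_zero fun u hu => h u ?_).symm
  simpa using hu

lemma integral_ramp {s : ℂ} (hs : s.re = 2) :
    ∫ u in Set.Ioi (0:ℝ), (u : ℂ) * exp (-s * u) = 1 / s ^ 2 := by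
  have hs0 : s ≠ 0 := by rintro rfl; norm_num at hs
  have hu1 (u : ℝ) (hu : 0 ≤ u) : ‖(u : ℂ) * exp (-s * u)‖ ≤ Real.exp (-1 * u) := by
    rw [norm_mul, norm_real, Real.norm_of_nonneg hu, Complex.norm_exp]
    have : (-s * u).re = -1 * u + -u := by simp [hs]; ring
    rw [this, Real.exp_add, mul_left_comm]
    refine mul_le_of_le_one_right (Real.exp_pos _).le ?_
    rw [Real.exp_neg, ← div_eq_mul_inv, div_le_one (Real.exp_pos _)]
    linarith [Real.add_one_le_exp u]
  have hu2 (u : ℝ) (hu : 0 ≤ u) : ‖exp (-s * u)‖ ≤ Real.exp (-1 * u) := by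
    rw [Complex.norm_exp]
    apply Real.exp_le_exp.2
    simp [hs]; linarith
  have hInt : IntegrableOn (fun u : ℝ => (u : ℂ) * exp (-s * u)) (Set.Ioi 0) := by
    refine Integrable.mono' (integrableOn_exp_mul_Ioi (a := -1) (by norm_num) 0)
      (by fun_prop) ?_
    filter_upwards [ae_restrict_mem measurableSet_Ioi] with u hu
    exact hu1 u (le_of_lt hu)
  have hlim : Tendsto (fun u : ℝ => -((u:ℂ) * exp (-s * u)) / s - exp (-s * u) / s ^ 2)
      atTop (𝓝 0) := by
    have h0 : Tendsto (fun u : ℝ => Real.exp (-1 * u)) atTop (𝓝 0) := by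
      simpa using Real.tendsto_exp_neg_atTop_nhds_zero
    have h1 : Tendsto (fun u : ℝ => (u:ℂ) * exp (-s * u)) atTop (𝓝 0) :=
      squeeze_zero_norm' ((eventually_ge_atTop 0).mono hu1) h0
    have h2 : Tendsto (fun u : ℝ => exp (-s * u)) atTop (𝓝 0) :=
      squeeze_zero_norm' ((eventually_ge_atTop 0).mono hu2) h0
    simpa using (h1.neg.div_const s).sub (h2.div_const (s ^ 2))
  have h := integral_Ioi_of_hasDerivAt_of_tendsto' (a := (0:ℝ))
    (f' := fun u : ℝ => (u : ℂ) * exp (-s * u)) (fun u _ => ?_) hInt hlim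
  · rw [h]; simp
  · have he : HasDerivAt (fun u : ℝ => exp (-s * u)) (exp (-s * u) * (-s)) u := by
      have := ((hasDerivAt_id u).ofReal_comp.const_mul (-s)).cexp
      simpa using this
    have hu : HasDerivAt (fun u : ℝ => (u : ℂ)) 1 u := by
      simpa using (hasDerivAt_id u).ofReal_comp
    refine HasDerivAt.congr_deriv (((hu.mul he).neg.div_const s).sub (he.div_const (s ^ 2))) ?_
    field_simp
    ring

lemma hasLap_ramp : HasLap (fun u => (ramp u : ℂ)) 1 (fun s => 1 / s ^ 2) where
  cont := by unfold ramp; fun_prop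
  zero u hu := by simp [ramp, hu]
  bound u := by
    rw [norm_real, Real.norm_of_nonneg (ramp_nonneg u), one_mul]
    exact ramp_le_exp u
  lap s hs := by
    rw [integral_of_zero (fun u hu => by simp [ramp, hu]), ← integral_ramp hs]
    refine setIntegral_congr_fun measurableSet_Ioi fun u hu => ?_
    have hu : 0 < u := hu
    simp [ramp, hu.le]

/-- The kernel with Laplace transform `1 / ((s - ρ) s ^ 2)`. -/
noncomputable def Kfun (ρ : ℂ) (u : ℝ) : ℂ := (exp (ρ * ramp u) - 1 - ρ * ramp u) / ρ ^ 2

lemma hasLap_Kfun {ρ : ℂ} (h0 : ρ ≠ 0) (h1 : ρ.re ≤ 1) :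
    HasLap (Kfun ρ) ((2 + ‖ρ‖) / ‖ρ‖ ^ 2) (fun s => 1 / ((s - ρ) * s ^ 2)) where
  cont := by unfold Kfun ramp; fun_prop
  zero u hu := by simp [Kfun, ramp, hu]
  bound u := by
    rcases le_total u 0 with hu | hu
    · have : Kfun ρ u = 0 := by simp [Kfun, ramp, hu]
      rw [this, norm_zero]; positivity
    have hr : ramp u = u := by simp [ramp, hu]
    have hrl := ramp_le_exp u
    have b1 : ‖exp (ρ * ramp u)‖ ≤ Real.exp (3 / 2 * u) := by
      rw [Complex.norm_exp, hr]
      apply Real.exp_le_exp.2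
      simp; nlinarith
    have b2 : (1:ℝ) ≤ Real.exp (3 / 2 * u) := Real.one_le_exp (by linarith)
    have b3 : ‖ρ * ramp u‖ ≤ ‖ρ‖ * Real.exp (3 / 2 * u) := by
      rw [norm_mul, norm_real, Real.norm_of_nonneg (ramp_nonneg u)]
      gcongr
    have b4 : ‖exp (ρ * ramp u) - 1 - ρ * ramp u‖ ≤ (2 + ‖ρ‖) * Real.exp (3 / 2 * u) := by
      refine (norm_sub_le _ _).trans ?_
      have := norm_sub_le (exp (ρ * ramp u)) 1
      rw [norm_one] at this
      linarith
    unfold Kfun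
    rw [norm_div, norm_pow, div_mul_eq_mul_div]
    gcongr
  lap s hs := by
    rw [integral_of_zero (fun u hu => by simp [Kfun, ramp, hu])]
    have hs0 : s ≠ 0 := by rintro rfl; norm_num at hs
    have hsρ : s - ρ ≠ 0 := by
      intro h
      have := congrArg re h
      simp [hs] at this; linarith
    have n1 : (ρ - s).re < 0 := by simp [hs]; linarith
    have n2 : (-s).re < 0 := by simp [hs]
    have e1 := integral_exp_mul_complex_Ioi n1 0
    have e2 := integral_exp_mul_complex_Ioi n2 0
    have e3 := integral_ramp hs
    have i1 := integrableOn_exp_mul_complex_Ioi n1 0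
    have i2 := integrableOn_exp_mul_complex_Ioi n2 0
    have i3 : IntegrableOn (fun u : ℝ => (u : ℂ) * exp (-s * u)) (Set.Ioi 0) := by
      refine (hasLap_ramp.integrable hs).integrableOn.congr_fun (fun u hu => ?_) measurableSet_Ioi
      have hu : 0 < u := hu
      simp [ramp, hu.le]
    have i12 : IntegrableOn (fun u : ℝ => exp ((ρ - s) * u) - exp (-s * u)) (Set.Ioi 0) := i1.sub i2
    have e4 : ∫ u in Set.Ioi (0:ℝ), Kfun ρ u * exp (-s * u) =
        ∫ u in Set.Ioi (0:ℝ), (1 / ρ ^ 2 * (exp ((ρ - s) * u) - exp (-s * u)) -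
          1 / ρ * ((u : ℂ) * exp (-s * u))) := by
      refine setIntegral_congr_fun measurableSet_Ioi fun u hu => ?_
      have hu : 0 < u := hu
      have hr : ramp u = u := by simp [ramp, hu.le]
      simp only [Kfun, hr]
      have : exp ((ρ - s) * u) = exp (ρ * u) * exp (-s * u) := by rw [← Complex.exp_add]; ring_nf
      rw [this]
      field_simp
    rw [e4, integral_sub (i12.const_mul _) (i3.const_mul _), integral_const_mul,
      integral_const_mul, integral_sub i1 i2, e1, e2, e3]
    have : ρ - s ≠ 0 := fun h => hsρ (by linear_combination -h)
    simp only [ofReal_zero, mul_zero, Complex.exp_zero]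
    field_simp
    ring

end MertensRH

/-! ### The explicit formula -/

namespace MertensRH
open Complex Filter Topology MeasureTheory

lemma HasLap.of_bound {f : ℝ → ℂ} {A B : ℝ} {F : ℂ → ℂ} (hf : HasLap f A F)
    (h : ∀ u, 0 ≤ u → ‖f u‖ ≤ B * Real.exp (3 / 2 * u)) (hB : 0 ≤ B) : HasLap f B F where
  cont := hf.cont
  zero := hf.zero
  bound u := by
    rcases le_total 0 u with hu | hu
    · exact h u hu
    · rw [hf.zero u hu, norm_zero]; positivity
  lap := hf.lap

instance : Countable Ord := by
  have h : (Set.univ : Set Ord) = ⋃ n : ℕ, {γ : Ord | ‖(γ : ℂ) * I - 1‖ ≤ n} := by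
    ext γ
    simpa using exists_nat_ge _
  rw [← Set.countable_univ_iff, h]
  refine Set.countable_iUnion fun n => ?_
  refine (finite_zeros differentiable_Xi (w := 1 / 2) ?_ n).countable
  have := Xi_ne_zero_of_one_le (s := 1) (by simp)
  norm_num at this ⊢
  exact this

/-- The zero `1/2 + iγ`. -/
noncomputable def rho (γ : ℝ) : ℂ := 1 / 2 + γ * I

lemma rho_re (γ : ℝ) : (rho γ).re = 1 / 2 := by simp [rho]

lemma normSq_rho (γ : ℝ) : ‖rho γ‖ ^ 2 = 1 / 4 + γ ^ 2 := by
  rw [← normSq_eq_norm_sq, normSq_apply]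
  simp [rho]; ring

lemma norm_rho_pos (γ : ℝ) : 0 < ‖rho γ‖ := by
  rw [norm_pos_iff]
  intro h
  have := congrArg re h
  rw [rho_re] at this
  norm_num at this

lemma rho_ne_zero (γ : ℝ) : rho γ ≠ 0 := norm_pos_iff.1 (norm_rho_pos γ)

/-- The real part of `u ρ / ρ ^ 2` involves only `1 / |ρ| ^ 2`. -/
lemma re_Kfun_rho (γ : ℝ) {u : ℝ} (hu : 0 ≤ u) :
    (Kfun (rho γ) u).re = ((exp (rho γ * u) - 1) / rho γ ^ 2).re - u / 2 / ‖rho γ‖ ^ 2 := by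
  have h0 := rho_ne_zero γ
  have h1 : Kfun (rho γ) u = (exp (rho γ * u) - 1) / rho γ ^ 2 - (u : ℂ) * (rho γ)⁻¹ := by
    simp only [Kfun, ramp, max_eq_left hu]
    field_simp
  rw [h1, sub_re, re_ofReal_mul, inv_re, rho_re, normSq_eq_norm_sq]
  ring

lemma norm_exp_rho (γ u : ℝ) : ‖exp (rho γ * u)‖ = Real.exp (u / 2) := by
  rw [Complex.norm_exp, re_mul_ofReal, rho_re]; ring_nf

lemma abs_re_Kfun_rho_le (γ : ℝ) {u : ℝ} (hu : 0 ≤ u) :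
    |(Kfun (rho γ) u).re| ≤ 2 * Real.exp (u / 2) / ‖rho γ‖ ^ 2 := by
  have hp := norm_rho_pos γ
  have h1 : ‖(exp (rho γ * u) - 1) / rho γ ^ 2‖ ≤ (Real.exp (u / 2) + 1) / ‖rho γ‖ ^ 2 := by
    rw [norm_div, norm_pow]
    gcongr
    refine (norm_sub_le _ _).trans ?_
    rw [norm_exp_rho, norm_one]
  have h2 := (abs_re_le_norm _).trans h1
  rw [re_Kfun_rho γ hu]
  refine (abs_sub _ _).trans ?_
  rw [abs_of_nonneg (by positivity : 0 ≤ u / 2 / ‖rho γ‖ ^ 2)]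
  refine (add_le_add_left h2 _).trans ?_
  rw [← add_div]
  gcongr
  linarith [Real.add_one_le_exp (u / 2)]

lemma Kfun_conj (ρ : ℂ) (u : ℝ) : Kfun ((starRingEnd ℂ) ρ) u = (starRingEnd ℂ) (Kfun ρ u) := by
  simp [Kfun, ← exp_conj]

lemma hasLap_zero (γ : ℝ) : HasLap (fun u => ((Kfun (rho γ) u).re : ℂ)) (2 / ‖rho γ‖ ^ 2)
    (fun s => ((s - 1 / 2) / ((s - 1 / 2) ^ 2 + γ ^ 2)) / s ^ 2) := by
  have h1 := hasLap_Kfun (rho_ne_zero γ) (by rw [rho_re]; norm_num)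
  have h2 := hasLap_Kfun (ρ := (starRingEnd ℂ) (rho γ)) (by simpa using rho_ne_zero γ)
    (by rw [conj_re, rho_re]; norm_num)
  have h3 := (h1.add h2).const_mul (1 / 2)
  have hfun : (fun u => (1 / 2 : ℂ) * (Kfun (rho γ) + Kfun ((starRingEnd ℂ) (rho γ))) u) =
      fun u => ((Kfun (rho γ) u).re : ℂ) := by
    ext u
    simp only [Pi.add_apply, Kfun_conj, add_conj]
    push_cast; ring
  rw [hfun] at h3
  refine (h3.congr (fun s hs => ?_)).of_bound (fun u hu => ?_) (by positivity)
  · simp only [Pi.add_apply]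
    have a1 : s - rho γ ≠ 0 := by
      intro h; have := congrArg re h; rw [sub_re, hs, rho_re] at this; norm_num at this
    have a2 : s - (starRingEnd ℂ) (rho γ) ≠ 0 := by
      intro h; have := congrArg re h; rw [sub_re, hs, conj_re, rho_re] at this; norm_num at this
    have a3 : s ≠ 0 := by rintro rfl; norm_num at hs
    have a4 : (s - rho γ) * (s - (starRingEnd ℂ) (rho γ)) = (s - 1 / 2) ^ 2 + γ ^ 2 := by
      simp only [rho, map_add, map_mul, conj_ofReal, conj_I, map_div₀, map_one, map_ofNat]
      linear_combination -(γ:ℂ) ^ 2 * I_sq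
    have a5 : (s - rho γ) + (s - (starRingEnd ℂ) (rho γ)) = 2 * (s - 1 / 2) := by
      simp only [rho, map_add, map_mul, conj_ofReal, conj_I, map_div₀, map_one, map_ofNat]
      ring
    rw [← a4]
    have : s - 1 / 2 = ((s - rho γ) + (s - (starRingEnd ℂ) (rho γ))) / 2 := by rw [a5]; ring
    rw [this]
    field_simp
    ring
  · rw [norm_real, Real.norm_eq_abs]
    refine (abs_re_Kfun_rho_le γ hu).trans ?_
    rw [mul_div_right_comm]
    gcongr
    linarith

/-- The contribution of the trivial zero `-N`. -/
noncomputable def triv (N u : ℝ) : ℝ := (1 - Real.exp (-N * ramp u)) / N ^ 2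

lemma triv_nonneg {N : ℝ} (hN : 0 < N) (u : ℝ) : 0 ≤ triv N u := by
  unfold triv
  have : Real.exp (-N * ramp u) ≤ 1 := Real.exp_le_one_iff.2 (by nlinarith [ramp_nonneg u])
  have : 0 ≤ 1 - Real.exp (-N * ramp u) := by linarith
  positivity

lemma triv_le {N : ℝ} (u : ℝ) : triv N u ≤ 1 / N ^ 2 := by
  unfold triv
  gcongr
  linarith [Real.exp_pos (-N * ramp u)]

lemma hasLap_triv {N : ℝ} (hN : 0 < N) : HasLap (fun u => (triv N u : ℂ)) (1 / N ^ 2)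
    (fun s => (1 / N - 1 / (s + N)) / s ^ 2) := by
  have hN' : (N : ℂ) ≠ 0 := by exact_mod_cast hN.ne'
  have h1 := hasLap_Kfun (ρ := -N) (neg_ne_zero.2 hN') (by simp; linarith)
  have h3 := (hasLap_ramp.const_mul (1 / N)).add (h1.const_mul (-1))
  have hfun : ((fun u => (1 / N : ℂ) * (ramp u : ℂ)) + fun u => -1 * Kfun (-N) u) =
      fun u => (triv N u : ℂ) := by
    ext u
    simp only [Pi.add_apply, Kfun, triv]
    push_cast
    field_simp
    ring
  rw [hfun] at h3
  refine (h3.congr (fun s hs => ?_)).of_bound (fun u hu => ?_) (by positivity)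
  · simp only [Pi.add_apply]
    have a1 : s + N ≠ 0 := by
      intro h; have := congrArg re h; rw [add_re, hs, ofReal_re] at this; simp at this; linarith
    have a2 : s - -N ≠ 0 := by simpa using a1
    have a3 : s ≠ 0 := by rintro rfl; norm_num at hs
    field_simp
    ring
  · rw [norm_real, Real.norm_of_nonneg (triv_nonneg hN u)]
    refine (triv_le u).trans ?_
    refine le_mul_of_one_le_right (by positivity) (Real.one_le_exp (by linarith))

lemma hasLap_vM (n : ℕ) : HasLap (fun u => vM n * (ramp (u - Real.log n) : ℂ))
    (‖vM n‖ * Real.exp (-(3 / 2) * Real.log n)) (fun s => LSeries.term vM s n / s ^ 2) := by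
  have h1 := ((hasLap_ramp.shift (l := Real.log n) (Real.log_natCast_nonneg n)).const_mul (vM n))
  rw [one_mul] at h1
  refine h1.congr fun s hs => ?_
  rcases eq_or_ne n 0 with rfl | hn
  · simp [vM]
  · rw [LSeries.term_of_ne_zero hn, cpow_def_of_ne_zero (by exact_mod_cast hn), natCast_log,
      div_eq_mul_inv (vM n), ← Complex.exp_neg]
    ring_nf

lemma summable_vM_bound : Summable fun n : ℕ => ‖vM n‖ * Real.exp (-(3 / 2) * Real.log n) := by
  have h := (ArithmeticFunction.LSeriesSummable_vonMangoldt (s := 3 / 2) (by norm_num)).norm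
  refine h.congr fun n => ?_
  rcases eq_or_ne n 0 with rfl | hn
  · simp [vM]
  · rw [LSeries.term_of_ne_zero hn, norm_div, cpow_def_of_ne_zero (by exact_mod_cast hn),
      ← natCast_log, Complex.norm_exp, div_eq_mul_inv, ← Real.exp_neg]
    congr 2
    norm_num
    rw [← natCast_log, ofReal_re]
    ring

lemma summable_mult_rho (hRH : RiemannHypothesis) :
    Summable fun γ : Ord => (mult γ : ℝ) / ‖rho γ‖ ^ 2 := by
  refine Summable.of_nonneg_of_le (fun γ => by positivity) (fun γ => ?_)
    ((summable_mult hRH).mul_left 4)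
  rw [normSq_rho, ← mul_div_assoc, div_le_div_iff₀ (by positivity) (by positivity)]
  have : (0:ℝ) ≤ mult γ := by positivity
  nlinarith [mul_nonneg this (sq_nonneg (γ:ℝ))]

lemma summable_triv_bound : Summable fun n : ℕ => 1 / (2 * ((n:ℝ) + 1)) ^ 2 := by
  refine (summable_inv_sq.mul_left (1 / 4)).congr fun n => ?_
  field_simp; norm_num

/-- The smoothed Chebyshev function `∑ Λ(n) (u - log n)⁺`. -/
noncomputable def phi (u : ℝ) : ℝ := ∑' n : ℕ, ArithmeticFunction.vonMangoldt n * ramp (u - Real.log n)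

/-- The explicit formula for the smoothed Chebyshev function: divided by `s ^ 2`, the terms of the
Mittag-Leffler expansion of `-ζ'/ζ` are Laplace transforms, and these determine the function. -/
theorem explicit_formula (hRH : RiemannHypothesis) : ∃ c : ℝ, ∀ u : ℝ, 0 ≤ u →
    phi u = Real.exp u - 1 - u + c * u + ∑' n : ℕ, triv (2 * ((n:ℝ) + 1)) u
      - ∑' γ : Ord, (mult γ : ℝ) * (Kfun (rho γ) u).re := by
  obtain ⟨c, hc⟩ := exists_zeta_identity hRH
  refine ⟨c, fun u hu => ?_⟩
  have h1 := HasLap.tsum hasLap_vM summable_vM_bound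
  have h2 := hasLap_Kfun (ρ := 1) one_ne_zero (by simp)
  have h3 := hasLap_ramp.const_mul c
  have h4 := HasLap.tsum (fun n : ℕ => hasLap_triv (N := 2 * ((n:ℝ) + 1)) (by positivity))
    summable_triv_bound
  have h5 := HasLap.tsum (fun γ : Ord => (hasLap_zero γ).const_mul (mult γ : ℂ))
    (by refine ((summable_mult_rho hRH).mul_left 2).congr fun γ => ?_
        simp; ring)
  have h6 := h1.add (((h2.add h3).add (h4.add (h5.const_mul (-1)))).const_mul (-1))
  have h7 := (h6.congr (G := 0) (fun s hs => ?_)).eq_zero u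
  · simp only [Pi.add_apply] at h7
    have e1 : (phi u : ℂ) = ∑' n : ℕ, vM n * (ramp (u - Real.log n) : ℂ) := by
      unfold phi; push_cast; rfl
    have e2 : Kfun 1 u = ((Real.exp u - 1 - u : ℝ) : ℂ) := by
      simp [Kfun, ramp, hu]
    have e3 : (ramp u : ℂ) = (u : ℂ) := by simp [ramp, hu]
    rw [← e1, e2, e3] at h7
    have h8 : (phi u : ℂ) = ((Real.exp u - 1 - u + c * u + ∑' n : ℕ, triv (2 * ((n:ℝ) + 1)) u
      - ∑' γ : Ord, (mult γ : ℝ) * (Kfun (rho γ) u).re : ℝ) : ℂ) := by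
      push_cast at h7 ⊢
      linear_combination h7
    exact_mod_cast h8
  · have hs0 : s ≠ 0 := by rintro rfl; norm_num at hs
    have hL := hc s (by rw [hs]; norm_num)
    rw [LSeries] at hL
    simp only [Pi.add_apply, Pi.zero_apply]
    have a1 : ∀ n : ℕ, ((1:ℂ) / ((2 * ((n:ℝ) + 1) : ℝ) : ℂ) - 1 / (s + ((2 * ((n:ℝ) + 1) : ℝ) : ℂ))) / s ^ 2
        = pfTerm n (s / 2) / 2 / s ^ 2 := by
      intro n
      have b1 : (n:ℂ) + 1 ≠ 0 := by exact_mod_cast n.succ_ne_zero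
      have b2 : s + 2 * (n + 1) ≠ 0 := by
        intro h; have := congrArg re h
        simp [hs] at this
        have : (0:ℝ) ≤ n := by positivity
        linarith
      have b3 : s / 2 + n + 1 ≠ 0 := by
        intro h; apply b2; linear_combination 2 * h
      have b4 : 1 / (s / 2 + n + 1) = 2 / (s + 2 * (n + 1)) := by
        rw [div_eq_div_iff b3 b2]; ring
      unfold pfTerm
      rw [b4]
      push_cast
      field_simp
    have a2 : ∀ γ : Ord, (mult γ : ℂ) * ((s - 1 / 2) / ((s - 1 / 2) ^ 2 + ((γ:ℝ):ℂ) ^ 2) / s ^ 2) =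
        (mult γ : ℂ) * ((s - 1 / 2) / ((s - 1 / 2) ^ 2 + ((γ:ℝ):ℂ) ^ 2)) / s ^ 2 := fun γ => by ring
    simp only [a1, a2, tsum_div_const]
    rw [hL]
    rw [← tsum_div_const]
    field_simp
    ring_nf

end MertensRH

/-! ### A weighted sum over the zeros -/

namespace MertensRH
open Complex Filter Topology MeasureTheory

lemma arctan_le_self {x : ℝ} (hx : 0 ≤ x) : Real.arctan x ≤ x := by
  have := Real.le_tan (Real.arctan_nonneg.2 hx) (Real.arctan_lt_pi_div_two x)
  rwa [Real.tan_arctan] at this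

lemma integral_inv_sq_add_ge {A γ : ℝ} (hA : 1 ≤ A) (hγ : 1 ≤ γ) :
    1 / γ - 1 / A - 1 / γ ^ 2 ≤ ∫ a in (1:ℝ)..A, 1 / (a ^ 2 + γ ^ 2) := by
  have hγ0 : 0 < γ := by linarith
  have hd : ∀ a ∈ Set.uIcc 1 A, HasDerivAt (fun a => Real.arctan (a / γ) / γ)
      (1 / (a ^ 2 + γ ^ 2)) a := by
    intro a _
    have h := (((hasDerivAt_id a).div_const γ).arctan).div_const γ
    refine h.congr_deriv ?_
    simp only [id]
    have : a ^ 2 + γ ^ 2 ≠ 0 := by positivity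
    have : 1 + (a / γ) ^ 2 ≠ 0 := by positivity
    field_simp
    ring
  have hc : Continuous fun a : ℝ => 1 / (a ^ 2 + γ ^ 2) := by
    refine continuous_const.div (by fun_prop) fun a => by positivity
  rw [intervalIntegral.integral_eq_sub_of_hasDerivAt hd (hc.intervalIntegrable _ _)]
  have h1 : Real.arctan (1 / γ) ≤ 1 / γ := arctan_le_self (by positivity)
  have h2 : Real.arctan (γ / A) ≤ γ / A := arctan_le_self (by positivity)
  have h3 : Real.arctan (A / γ) = Real.pi / 2 - Real.arctan (γ / A) := by
    rw [← Real.arctan_inv_of_pos (by positivity), inv_div]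
  have h4 : 1 - γ / A - 1 / γ ≤ Real.arctan (A / γ) - Real.arctan (1 / γ) := by
    linarith [Real.pi_gt_three]
  rw [← sub_div]
  calc _ = (1 - γ / A - 1 / γ) / γ := by field_simp
    _ ≤ _ := by gcongr

/-- Up to a constant factor, a bound for the size with which the zero `ρ` enters a difference quotient
with step `1 / A`. -/
noncomputable def wt (A γ : ℝ) : ℝ := min (1 / ‖rho γ‖) (2 * A / ‖rho γ‖ ^ 2)

/-- For `1 ≤ |γ| ≤ A` the integral is at least `1 / |γ| - 1 / A - 1 / γ ^ 2`; the two terms at the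
endpoints `a = A` and `a = 1` make up the difference, and suffice by themselves for other `γ`. -/
lemma wt_le {A : ℝ} (hA : 1 ≤ A) (γ : ℝ) :
    wt A γ ≤ (∫ a in (1:ℝ)..A, 1 / (a ^ 2 + γ ^ 2)) + 4 * (A / (A ^ 2 + γ ^ 2))
      + 4 * (1 / (1 ^ 2 + γ ^ 2)) := by
  have hA0 : 0 < A := by linarith
  have hI : 0 ≤ ∫ a in (1:ℝ)..A, 1 / (a ^ 2 + γ ^ 2) :=
    intervalIntegral.integral_nonneg hA fun a _ => by positivity
  have hp1 : 0 ≤ 4 * (A / (A ^ 2 + γ ^ 2)) := by positivity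
  have hp2 : 0 ≤ 4 * (1 / (1 ^ 2 + γ ^ 2)) := by positivity
  have hn := normSq_rho γ
  have hnp := norm_rho_pos γ
  have hγn : |γ| ≤ ‖rho γ‖ := by
    refine abs_le_of_sq_le_sq ?_ hnp.le
    rw [hn]; linarith
  rcases lt_or_ge |γ| 1 with h1 | h1
  · have h2 : 1 / 2 ≤ ‖rho γ‖ := by
      refine le_of_sq_le_sq ?_ hnp.le
      rw [hn]; nlinarith
    have h3 : 1 / ‖rho γ‖ ≤ 2 := by
      rw [div_le_iff₀ hnp]; linarith
    have h4 : 2 ≤ 4 * (1 / (1 ^ 2 + γ ^ 2)) := by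
      rw [mul_one_div, le_div_iff₀ (by positivity)]
      have := (sq_lt_one_iff_abs_lt_one γ).2 h1
      linarith
    exact (min_le_left _ _).trans (by linarith)
  have hγ0 : 0 < |γ| := by linarith
  rcases lt_or_ge A |γ| with h2 | h2
  · have h3 : 2 * A / ‖rho γ‖ ^ 2 ≤ 4 * (A / (A ^ 2 + γ ^ 2)) := by
      rw [hn, ← mul_div_assoc, div_le_div_iff₀ (by positivity) (by positivity)]
      have : A ^ 2 ≤ γ ^ 2 := by rw [← sq_abs γ]; gcongr
      nlinarith
    exact (min_le_right _ _).trans (by linarith)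
  · have h3 := integral_inv_sq_add_ge hA h1
    simp only [sq_abs] at h3
    have h4 : 1 / ‖rho γ‖ ≤ 1 / |γ| := one_div_le_one_div_of_le hγ0 hγn
    have hs : γ ^ 2 ≤ A ^ 2 := by rw [← sq_abs γ]; gcongr
    have h5 : 1 / A ≤ 4 * (A / (A ^ 2 + γ ^ 2)) := by
      rw [← mul_div_assoc, div_le_div_iff₀ hA0 (by positivity)]
      nlinarith
    have h7 : 1 ≤ γ ^ 2 := by rw [← sq_abs γ]; nlinarith
    have h6 : 1 / γ ^ 2 ≤ 4 * (1 / (1 ^ 2 + γ ^ 2)) := by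
      rw [← mul_div_assoc, div_le_div_iff₀ (by positivity) (by positivity)]
      nlinarith
    exact (min_le_left _ _).trans (by linarith)

lemma integral_log_div {A C : ℝ} (hA : 1 ≤ A) :
    ∫ a in (1:ℝ)..A, (Real.log a / 2 + C) / a = Real.log A ^ 2 / 4 + C * Real.log A := by
  have hpos : ∀ a ∈ Set.uIcc 1 A, a ≠ 0 := by
    intro a ha
    rw [Set.uIcc_of_le hA] at ha
    linarith [ha.1]
  have hd : ∀ a ∈ Set.uIcc 1 A, HasDerivAt (fun a => Real.log a ^ 2 / 4 + C * Real.log a)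
      ((Real.log a / 2 + C) / a) a := by
    intro a ha
    have h := Real.hasDerivAt_log (hpos a ha)
    refine (((h.pow 2).div_const 4).add (h.const_mul C)).congr_deriv ?_
    have := hpos a ha
    field_simp
    norm_num
    ring
  rw [intervalIntegral.integral_eq_sub_of_hasDerivAt hd]
  · simp
  · refine ContinuousOn.intervalIntegrable ?_
    refine ContinuousOn.div ?_ continuousOn_id hpos
    exact ((Real.continuousOn_log.mono fun a ha => hpos a ha).div_const 2).add continuousOn_const

/-- The bound `∑ a / (a² + γ²) ≤ ½ log a + O(1)`, integrated against `da / a` over `[1, A]`, controls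
`∑ min(1/|ρ|, 2A/|ρ|²)`. -/
theorem exists_sum_wt_le (hRH : RiemannHypothesis) : ∃ C : ℝ, 0 ≤ C ∧ ∀ A : ℝ, 1 ≤ A →
    ∀ F : Finset Ord, ∑ γ ∈ F, (mult γ : ℝ) * wt A γ ≤
      Real.log A ^ 2 / 4 + C * (Real.log A + 1) := by
  obtain ⟨C, hC, hS⟩ := exists_zero_sum_bound hRH
  have hfin : ∀ a : ℝ, 1 ≤ a → ∀ F : Finset Ord,
      ∑ γ ∈ F, (mult γ : ℝ) * (a / (a ^ 2 + (γ:ℝ) ^ 2)) ≤ Real.log a / 2 + C := by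
    intro a ha F
    obtain ⟨S, h1, h2⟩ := hS a ha
    exact (sum_le_hasSum F (fun γ _ => by positivity) h1).trans h2
  refine ⟨8 * C + 2, by linarith, fun A hA F => ?_⟩
  have hL : 0 ≤ Real.log A := Real.log_nonneg hA
  have hInt : ∀ γ : Ord, IntervalIntegrable (fun a : ℝ => (mult γ : ℝ) * (1 / (a ^ 2 + (γ:ℝ) ^ 2)))
      volume 1 A := by
    intro γ
    refine ContinuousOn.intervalIntegrable ?_
    refine continuousOn_const.mul (continuousOn_const.div (by fun_prop) fun a ha => ?_)
    rw [Set.uIcc_of_le hA] at ha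
    have := ha.1
    positivity
  have hI : ∑ γ ∈ F, (mult γ : ℝ) * ∫ a in (1:ℝ)..A, 1 / (a ^ 2 + (γ:ℝ) ^ 2) ≤
      Real.log A ^ 2 / 4 + C * Real.log A := by
    simp only [← intervalIntegral.integral_const_mul]
    rw [← intervalIntegral.integral_finsetSum fun γ _ => hInt γ, ← integral_log_div hA]
    refine intervalIntegral.integral_mono_on hA ?_ ?_ fun a ha => ?_
    · exact (IntervalIntegrable.sum F fun γ _ => hInt γ).congr (by
        intro x _; simp)
    · have hpos : ∀ a ∈ Set.uIcc 1 A, a ≠ 0 := by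
        intro a ha
        rw [Set.uIcc_of_le hA] at ha
        linarith [ha.1]
      refine ContinuousOn.intervalIntegrable ?_
      refine ContinuousOn.div ?_ continuousOn_id hpos
      exact ((Real.continuousOn_log.mono fun a ha => hpos a ha).div_const 2).add continuousOn_const
    · have ha0 : 0 < a := by linarith [ha.1]
      rw [le_div_iff₀ ha0, Finset.sum_mul]
      refine le_trans (le_of_eq (Finset.sum_congr rfl fun γ _ => ?_)) (hfin a ha.1 F)
      ring
  have h1 := hfin A hA F
  have h2 := hfin 1 le_rfl F
  rw [Real.log_one] at h2
  calc _ ≤ ∑ γ ∈ F, (mult γ : ℝ) * ((∫ a in (1:ℝ)..A, 1 / (a ^ 2 + (γ:ℝ) ^ 2))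
        + 4 * (A / (A ^ 2 + (γ:ℝ) ^ 2)) + 4 * (1 / (1 ^ 2 + (γ:ℝ) ^ 2))) := by
        gcongr with γ; exact wt_le hA γ
    _ = (∑ γ ∈ F, (mult γ : ℝ) * ∫ a in (1:ℝ)..A, 1 / (a ^ 2 + (γ:ℝ) ^ 2))
        + 4 * (∑ γ ∈ F, (mult γ : ℝ) * (A / (A ^ 2 + (γ:ℝ) ^ 2)))
        + 4 * (∑ γ ∈ F, (mult γ : ℝ) * (1 / (1 ^ 2 + (γ:ℝ) ^ 2))) := by
        rw [Finset.mul_sum, Finset.mul_sum, ← Finset.sum_add_distrib, ← Finset.sum_add_distrib]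
        exact Finset.sum_congr rfl fun γ _ => by ring
    _ ≤ _ := by nlinarith

end MertensRH

/-! ### Smoothed and unsmoothed Chebyshev functions -/

namespace MertensRH
open Complex Filter Topology MeasureTheory

lemma ramp_eq_zero_of_floor_lt {u : ℝ} {n : ℕ} (hn : ⌊Real.exp u⌋₊ < n) :
    ramp (u - Real.log n) = 0 := by
  have h1 : Real.exp u < n := (Nat.floor_lt (Real.exp_pos u).le).1 hn
  have h2 : u < Real.log n := (Real.lt_log_iff_exp_lt ((Real.exp_pos u).trans h1)).2 h1
  exact max_eq_right (by linarith)

lemma ramp_mono {a b : ℝ} (h : a ≤ b) : ramp a ≤ ramp b := max_le_max h le_rfl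

lemma phi_eq_sum {u Y : ℝ} (h : u ≤ Y) : phi u =
    ∑ n ∈ Finset.Ioc 0 ⌊Real.exp Y⌋₊, ArithmeticFunction.vonMangoldt n * ramp (u - Real.log n) := by
  refine tsum_eq_sum fun n hn => ?_
  rw [Finset.mem_Ioc, not_and_or] at hn
  rcases hn with hn | hn
  · have : n = 0 := by omega
    simp [this]
  · have : ramp (u - Real.log n) ≤ 0 :=
      (ramp_mono (by linarith)).trans (ramp_eq_zero_of_floor_lt (u := Y) (by omega)).le
    rw [le_antisymm this (ramp_nonneg _), mul_zero]

/-- `phi` is convex with slope `ψ (exp u)` at `u`, so a secant to the right is at least as steep. -/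
lemma mul_psi_le {u h : ℝ} (hh : 0 ≤ h) :
    h * Chebyshev.psi (Real.exp u) ≤ phi (u + h) - phi u := by
  rw [phi_eq_sum (le_refl (u + h)), phi_eq_sum (by linarith : u ≤ u + h), ← Finset.sum_sub_distrib,
    Chebyshev.psi, Finset.mul_sum]
  have hsub : Finset.Ioc 0 ⌊Real.exp u⌋₊ ⊆ Finset.Ioc 0 ⌊Real.exp (u + h)⌋₊ := by
    gcongr; linarith
  refine le_trans (Finset.sum_le_sum fun n hn => ?_)
    (Finset.sum_le_sum_of_subset_of_nonneg hsub fun n _ _ => ?_)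
  · rw [Finset.mem_Ioc] at hn
    have hn0 : (0:ℝ) < n := by exact_mod_cast hn.1
    have h1 : (n:ℝ) ≤ Real.exp u := (Nat.le_floor_iff (Real.exp_pos u).le).1 hn.2
    have h2 : Real.log n ≤ u := (Real.log_le_iff_le_exp hn0).2 h1
    rw [ramp, ramp, max_eq_left (by linarith), max_eq_left (by linarith)]
    exact le_of_eq (by ring)
  · rw [← mul_sub]
    exact mul_nonneg ArithmeticFunction.vonMangoldt_nonneg
      (sub_nonneg.2 (ramp_mono (by linarith)))

/-- `phi` is convex with slope `ψ (exp u)` at `u`, so a secant to the left is at most as steep. -/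
lemma le_mul_psi {u h : ℝ} (hh : 0 ≤ h) :
    phi u - phi (u - h) ≤ h * Chebyshev.psi (Real.exp u) := by
  rw [phi_eq_sum (le_refl u), phi_eq_sum (by linarith : u - h ≤ u), ← Finset.sum_sub_distrib,
    Chebyshev.psi, Finset.mul_sum]
  refine Finset.sum_le_sum fun n _ => ?_
  rw [← mul_sub, mul_comm h]
  refine mul_le_mul_of_nonneg_left ?_ ArithmeticFunction.vonMangoldt_nonneg
  rw [sub_le_iff_le_add, ramp]
  refine max_le ?_ (by linarith [ramp_nonneg (u - h - Real.log n)])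
  have : u - h - Real.log n ≤ ramp (u - h - Real.log n) := le_max_left _ _
  linarith

lemma norm_exp_sub_exp_le (γ : ℝ) {a b : ℝ} (hab : a ≤ b) :
    ‖exp (rho γ * b) - exp (rho γ * a)‖ ≤ ‖rho γ‖ * Real.exp (b / 2) * (b - a) := by
  refine norm_image_sub_le_of_norm_deriv_le_segment' (f := fun x : ℝ => exp (rho γ * x))
    (f' := fun x : ℝ => exp (rho γ * x) * rho γ) (fun x _ => ?_) (fun x hx => ?_) b
    (Set.right_mem_Icc.2 hab)
  · have := ((hasDerivAt_id x).ofReal_comp.const_mul (rho γ)).cexp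
    simpa using this.hasDerivWithinAt
  · rw [norm_mul, norm_exp_rho, mul_comm]
    have := hx.2
    gcongr

/-- The contribution of one zero to a difference of `phi` with step `exp (-u / 2)`: the two entries of
the minimum in `wt` come from the mean value inequality and from bounding both exponentials separately. -/
lemma abs_Kfun_sub_le (γ : ℝ) {u b : ℝ} (hu : 2 ≤ u) (hb : b ≤ u + Real.exp (-(u / 2)))
    (hb' : u ≤ b) :
    |(Kfun (rho γ) b).re - (Kfun (rho γ) (b - Real.exp (-(u / 2)))).re| ≤
      Real.exp (-(u / 2)) * (3 / 2 * Real.exp (u / 2) * wt (Real.exp (u / 2)) γ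
        + 1 / ‖rho γ‖ ^ 2) := by
  set h := Real.exp (-(u / 2)) with hh
  have hn := norm_rho_pos γ
  have hpos : 0 < h := Real.exp_pos _
  have h1 : h ≤ 1 / 2 := by
    have : h ≤ Real.exp (-1) := Real.exp_le_exp.2 (by linarith)
    linarith [Real.exp_neg_one_lt_d9]
  have hhA : h * Real.exp (u / 2) = 1 := by rw [hh, ← Real.exp_add]; simp
  have hE : Real.exp (b / 2) ≤ 3 / 2 * Real.exp (u / 2) := by
    have e1 : Real.exp (b / 2) ≤ Real.exp (1 / 4) * Real.exp (u / 2) := by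
      rw [← Real.exp_add]; exact Real.exp_le_exp.2 (by linarith)
    have e2 : Real.exp (1 / 4) ≤ 3 / 2 := by
      have := Real.exp_bound_div_one_sub_of_interval (x := 1 / 4) (by norm_num) (by norm_num)
      linarith
    exact e1.trans (by gcongr)
  rw [re_Kfun_rho γ (by linarith), re_Kfun_rho γ (by linarith)]
  have e3 : ((exp (rho γ * b) - 1) / rho γ ^ 2).re - b / 2 / ‖rho γ‖ ^ 2 -
      (((exp (rho γ * (b - h : ℝ)) - 1) / rho γ ^ 2).re - (b - h) / 2 / ‖rho γ‖ ^ 2) =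
      ((exp (rho γ * b) - exp (rho γ * (b - h : ℝ))) / rho γ ^ 2).re - h / 2 / ‖rho γ‖ ^ 2 := by
    have : (exp (rho γ * b) - exp (rho γ * (b - h : ℝ))) / rho γ ^ 2 =
      (exp (rho γ * b) - 1) / rho γ ^ 2 - (exp (rho γ * (b - h : ℝ)) - 1) / rho γ ^ 2 := by ring
    rw [this, sub_re]; ring
  rw [e3]
  have e4 : ‖(exp (rho γ * b) - exp (rho γ * (b - h : ℝ))) / rho γ ^ 2‖ ≤
      h * (3 / 2 * Real.exp (u / 2) * wt (Real.exp (u / 2)) γ) := by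
    rw [norm_div, norm_pow, wt]
    rcases le_total (1 / ‖rho γ‖) (2 * Real.exp (u / 2) / ‖rho γ‖ ^ 2) with hm | hm
    · rw [min_eq_left hm]
      have := norm_exp_sub_exp_le γ (by linarith : b - h ≤ b)
      calc _ ≤ ‖rho γ‖ * (3 / 2 * Real.exp (u / 2)) * h / ‖rho γ‖ ^ 2 := by
            gcongr
            refine this.trans ?_
            rw [sub_sub_cancel]
            gcongr
        _ = _ := by field_simp
    · rw [min_eq_right hm]
      have e5 : Real.exp ((b - h) / 2) ≤ Real.exp (b / 2) := Real.exp_le_exp.2 (by linarith)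
      have := norm_sub_le (exp (rho γ * b)) (exp (rho γ * (b - h : ℝ)))
      rw [norm_exp_rho, norm_exp_rho] at this
      calc _ ≤ (2 * (3 / 2 * Real.exp (u / 2))) / ‖rho γ‖ ^ 2 := by
            gcongr
            linarith
        _ = (h * Real.exp (u / 2)) * ((2 * (3 / 2 * Real.exp (u / 2))) / ‖rho γ‖ ^ 2) := by
            rw [hhA, one_mul]
        _ = _ := by ring
  refine (abs_sub _ _).trans ?_
  have e6 := (abs_re_le_norm _).trans e4
  rw [abs_of_nonneg (by positivity : 0 ≤ h / 2 / ‖rho γ‖ ^ 2), mul_add, mul_one_div]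
  have e7 : h / 2 / ‖rho γ‖ ^ 2 ≤ h / ‖rho γ‖ ^ 2 := by gcongr; linarith
  linarith

/-- The sum over the nontrivial zeros in the explicit formula. -/
noncomputable def zsum (u : ℝ) : ℝ := ∑' γ : Ord, (mult γ : ℝ) * (Kfun (rho γ) u).re

lemma norm_zterm_le (γ : Ord) {u : ℝ} (hu : 0 ≤ u) :
    ‖(mult γ : ℝ) * (Kfun (rho γ) u).re‖ ≤ 2 * Real.exp (u / 2) * ((mult γ : ℝ) / ‖rho γ‖ ^ 2) := by
  rw [norm_mul, Real.norm_natCast, Real.norm_eq_abs]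
  calc _ ≤ (mult γ : ℝ) * (2 * Real.exp (u / 2) / ‖rho γ‖ ^ 2) := by
        gcongr; exact abs_re_Kfun_rho_le γ hu
    _ = _ := by ring

lemma summable_zterm (hRH : RiemannHypothesis) {u : ℝ} (hu : 0 ≤ u) :
    Summable fun γ : Ord => (mult γ : ℝ) * (Kfun (rho γ) u).re :=
  Summable.of_norm_bounded ((summable_mult_rho hRH).mul_left _) fun γ => norm_zterm_le γ hu

lemma abs_zsum_le (hRH : RiemannHypothesis) {u : ℝ} (hu : 0 ≤ u) :
    |zsum u| ≤ 2 * Real.exp (u / 2) * ∑' γ : Ord, (mult γ : ℝ) / ‖rho γ‖ ^ 2 := by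
  rw [← tsum_mul_left]
  exact tsum_of_norm_bounded ((summable_mult_rho hRH).mul_left _).hasSum
    fun γ => norm_zterm_le γ hu

/-- The constant is `3 / 32 = 3 / 2 * (1 / 4) * (1 / 4)`: the factor from `abs_Kfun_sub_le`, the leading
constant of `exists_sum_wt_le`, and `log A ^ 2 = u ^ 2 / 4` for `A = exp (u / 2)`. -/
lemma exists_zsum_sub_le (hRH : RiemannHypothesis) : ∃ C : ℝ, 0 ≤ C ∧ ∀ u b : ℝ, 2 ≤ u →
    b ≤ u + Real.exp (-(u / 2)) → u ≤ b →
    |zsum b - zsum (b - Real.exp (-(u / 2)))| ≤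
      Real.exp (-(u / 2)) * (Real.exp (u / 2) * (3 / 32 * u ^ 2 + C * (u + 1))) := by
  obtain ⟨C, hC, hwt⟩ := exists_sum_wt_le hRH
  set D := ∑' γ : Ord, (mult γ : ℝ) / ‖rho γ‖ ^ 2 with hD
  have hD0 : 0 ≤ D := tsum_nonneg fun γ => by positivity
  refine ⟨3 / 2 * C + D, by positivity, fun u b hu hb hb' => ?_⟩
  have hexp : Real.exp (-(u / 2)) ≤ 1 := Real.exp_le_one_iff.2 (by linarith)
  set A := Real.exp (u / 2) with hA
  have hA1 : 1 ≤ A := Real.one_le_exp (by linarith)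
  have hlog : Real.log A = u / 2 := Real.log_exp _
  have hnn : ∀ γ : Ord, 0 ≤ (mult γ : ℝ) * wt A γ := fun γ => by
    unfold wt; positivity
  have hsum := summable_of_sum_le hnn (hwt A hA1)
  have hle : ∑' γ : Ord, (mult γ : ℝ) * wt A γ ≤ Real.log A ^ 2 / 4 + C * (Real.log A + 1) :=
    Real.tsum_le_of_sum_le hnn (hwt A hA1)
  unfold zsum
  rw [← (summable_zterm hRH (by linarith)).tsum_sub (summable_zterm hRH (by linarith))]
  have h1 := (((hsum.hasSum.mul_left (3 / 2 * A)).add (summable_mult_rho hRH).hasSum).mul_left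
    (Real.exp (-(u / 2))))
  have h2 := tsum_of_norm_bounded (f := fun γ : Ord => (mult γ : ℝ) * (Kfun (rho γ) b).re -
    (mult γ : ℝ) * (Kfun (rho γ) (b - Real.exp (-(u / 2)))).re) h1 (fun γ => ?_)
  · rw [Real.norm_eq_abs] at h2
    refine h2.trans ?_
    rw [← hD]
    gcongr
    rw [hlog] at hle
    calc _ ≤ 3 / 2 * A * ((u / 2) ^ 2 / 4 + C * (u / 2 + 1)) + A * D := by
          gcongr; nlinarith
      _ = A * (3 / 32 * u ^ 2 + (3 / 2 * C * (u / 2 + 1) + D)) := by ring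
      _ ≤ _ := by
        gcongr
        nlinarith [mul_nonneg hC (by linarith : 0 ≤ u), mul_nonneg hD0 (by linarith : 0 ≤ u)]
  · rw [← mul_sub, norm_mul, Real.norm_natCast, Real.norm_eq_abs]
    calc _ ≤ (mult γ : ℝ) * _ :=
          mul_le_mul_of_nonneg_left (abs_Kfun_sub_le γ hu hb hb') (by positivity)
      _ = _ := by ring

/-- The sum over the trivial zeros in the explicit formula. -/
noncomputable def tsumTriv (u : ℝ) : ℝ := ∑' n : ℕ, triv (2 * ((n:ℝ) + 1)) u

lemma tsumTriv_nonneg (u : ℝ) : 0 ≤ tsumTriv u :=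
  tsum_nonneg fun n => triv_nonneg (by positivity) u

lemma tsumTriv_le (u : ℝ) : tsumTriv u ≤ ∑' n : ℕ, 1 / (2 * ((n:ℝ) + 1)) ^ 2 := by
  refine Summable.tsum_le_tsum (fun n => triv_le u) ?_ summable_triv_bound
  exact Summable.of_nonneg_of_le (fun n => triv_nonneg (by positivity) u) (fun n => triv_le u)
    summable_triv_bound

/-- Smoothed prime number theorem with square-root error. -/
theorem exists_phi_bound (hRH : RiemannHypothesis) : ∃ C : ℝ, 0 ≤ C ∧ ∀ u : ℝ, 0 ≤ u →
    |phi u - Real.exp u| ≤ C * Real.exp (u / 2) := by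
  obtain ⟨c, hc⟩ := explicit_formula hRH
  set B := ∑' n : ℕ, 1 / (2 * ((n:ℝ) + 1)) ^ 2 with hB
  set D := ∑' γ : Ord, (mult γ : ℝ) / ‖rho γ‖ ^ 2 with hD
  have hB0 : 0 ≤ B := tsum_nonneg fun n => by positivity
  have hD0 : 0 ≤ D := tsum_nonneg fun γ => by positivity
  refine ⟨2 + 2 * |c| + B + 2 * D, by positivity, fun u hu => ?_⟩
  have h1 := hc u hu
  change phi u = _ + tsumTriv u - zsum u at h1
  have h2 := abs_zsum_le hRH hu
  rw [← hD] at h2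
  have h3 := tsumTriv_nonneg u
  have h4 := tsumTriv_le u
  rw [← hB] at h4
  have h5 := Real.add_one_le_exp (u / 2)
  have h6 : 1 ≤ Real.exp (u / 2) := Real.one_le_exp (by linarith)
  have h7 : |c * u| ≤ |c| * (2 * Real.exp (u / 2)) := by
    rw [abs_mul, abs_of_nonneg hu]; gcongr; linarith
  have h8 : B ≤ B * Real.exp (u / 2) := le_mul_of_one_le_right hB0 h6
  have h9 := abs_le.1 h7
  have h10 := abs_le.1 h2
  rw [abs_le]
  constructor <;> nlinarith

/-- The Chebyshev function under the Riemann hypothesis; the constant `3 / 32` is not optimal. -/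
theorem exists_psi_bound (hRH : RiemannHypothesis) : ∃ C : ℝ, 0 ≤ C ∧ ∀ u : ℝ, 2 ≤ u →
    |Chebyshev.psi (Real.exp u) - Real.exp u| ≤
      Real.exp (u / 2) * (3 / 32 * u ^ 2 + C * (u + 1)) := by
  obtain ⟨c, hc⟩ := explicit_formula hRH
  obtain ⟨C, hC, hz⟩ := exists_zsum_sub_le hRH
  set B := ∑' n : ℕ, 1 / (2 * ((n:ℝ) + 1)) ^ 2 with hB
  have hB0 : 0 ≤ B := tsum_nonneg fun n => by positivity
  refine ⟨2 + |c| + B + C, by positivity, fun u hu => ?_⟩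
  have hhA : Real.exp (-(u / 2)) * Real.exp (u / 2) = 1 := by rw [← Real.exp_add]; simp
  have hAA : Real.exp u = Real.exp (u / 2) * Real.exp (u / 2) := by rw [← Real.exp_add]; ring_nf
  have hz1 := hz u u hu (by linarith [Real.exp_pos (-(u / 2))]) le_rfl
  have hz2 := hz u (u + Real.exp (-(u / 2))) hu le_rfl (by linarith [Real.exp_pos (-(u / 2))])
  rw [add_sub_cancel_right] at hz2
  have hA1 : 1 ≤ Real.exp (u / 2) := Real.one_le_exp (by linarith)
  have hh0 := Real.exp_pos (-(u / 2))
  have hh1 : Real.exp (-(u / 2)) ≤ 1 := Real.exp_le_one_iff.2 (by linarith)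
  set h := Real.exp (-(u / 2))
  set A := Real.exp (u / 2)
  set W := A * (3 / 32 * u ^ 2 + C * (u + 1)) with hW
  have hx1 := abs_le.1 (Real.abs_exp_sub_one_sub_id_le (x := h) (by rw [abs_of_pos hh0]; exact hh1))
  have hx2 := abs_le.1 (Real.abs_exp_sub_one_sub_id_le (x := -h)
    (by rw [abs_neg, abs_of_pos hh0]; exact hh1))
  have hp1 := mul_psi_le (u := u) hh0.le
  have hp2 := le_mul_psi (u := u) hh0.le
  have f0 := hc u (by linarith)
  have f1 := hc (u + h) (by linarith)
  have f2 := hc (u - h) (by linarith)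
  change phi u = _ + tsumTriv u - zsum u at f0
  change phi (u + h) = _ + tsumTriv (u + h) - zsum (u + h) at f1
  change phi (u - h) = _ + tsumTriv (u - h) - zsum (u - h) at f2
  have t0 := tsumTriv_nonneg u
  have t0' := tsumTriv_le u
  have t1 := tsumTriv_nonneg (u - h)
  have t1' := tsumTriv_le (u + h)
  have t2 := tsumTriv_le (u - h)
  have hz1 := abs_le.1 hz1
  have hz2 := abs_le.1 hz2
  have hc' := neg_abs_le c
  have hc'' := le_abs_self c
  rw [Real.exp_add] at f1
  rw [sub_eq_add_neg, Real.exp_add, ← sub_eq_add_neg] at f2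
  have hE := Real.exp_pos u
  -- `exp u * h ^ 2 = 1` for the step `h = exp (-u / 2)`
  have hE2 : Real.exp u * h ^ 2 = 1 := by rw [hAA]; linear_combination (h * A + 1) * hhA
  have up : h * (Chebyshev.psi (Real.exp u) - Real.exp u) ≤ h * (A + |c| + B * A + W) := by
    have g1 : Real.exp u * Real.exp h ≤ Real.exp u * (1 + h + h ^ 2) := by
      gcongr; linarith
    have g2 : c * h ≤ |c| * h := by gcongr
    have g3 : h * (B * A) = B := by linear_combination B * hhA
    have g4 : h * (A + |c| + B * A + W) = 1 + |c| * h + B + h * W := by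
      linear_combination (1 + B) * hhA
    rw [g4]
    linarith
  have low : h * (Real.exp u - Chebyshev.psi (Real.exp u)) ≤ h * (A + 1 + |c| + B * A + W) := by
    have g1 : Real.exp u * Real.exp (-h) ≤ Real.exp u * (1 - h + h ^ 2) := by
      gcongr; linarith
    have g2 : -|c| * h ≤ c * h := by gcongr
    have g4 : h * (A + 1 + |c| + B * A + W) = 1 + h + |c| * h + B + h * W := by
      linear_combination (1 + B) * hhA
    rw [g4]
    linarith
  have up' := le_of_mul_le_mul_left up hh0
  have low' := le_of_mul_le_mul_left low hh0
  have fin : A + 1 + |c| + B * A + W ≤ A * (3 / 32 * u ^ 2 + (2 + |c| + B + C) * (u + 1)) := by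
    have : A * (3 / 32 * u ^ 2 + (2 + |c| + B + C) * (u + 1)) = W + A * (2 + |c| + B) * (u + 1) := by
      rw [hW]; ring
    rw [this]
    have k1 : A * (2 + |c| + B) ≤ A * (2 + |c| + B) * (u + 1) :=
      le_mul_of_one_le_right (by positivity) (by linarith)
    have k2 : |c| ≤ A * |c| := le_mul_of_one_le_left (abs_nonneg _) hA1
    have k3 : A * (2 + |c| + B) = 2 * A + A * |c| + B * A := by ring
    linarith
  rw [abs_le]
  constructor <;> linarith

end MertensRH

/-! ### Prime powers and partial summation -/

namespace MertensRH
open Complex Filter Topology MeasureTheory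

/-- `Λ` restricted to the integers that are not prime. -/
noncomputable def ppL (n : ℕ) : ℝ := if n.Prime then 0 else ArithmeticFunction.vonMangoldt n

lemma ppL_nonneg (n : ℕ) : 0 ≤ ppL n := by
  unfold ppL
  split_ifs
  exacts [le_rfl, ArithmeticFunction.vonMangoldt_nonneg]

lemma sum_ppL (x : ℝ) : ∑ n ∈ Finset.Icc 0 ⌊x⌋₊, ppL n = Chebyshev.psi x - Chebyshev.theta x := by
  rw [Chebyshev.psi_sub_theta_eq_sum_not_prime, Finset.sum_filter, ← Finset.add_sum_Ioc_eq_sum_Icc]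
  · simp [ppL, ite_not]
  · exact Nat.zero_le _

lemma hasDerivAt_inv_sqrt {t : ℝ} (ht : 0 < t) :
    HasDerivAt (fun t : ℝ => -2 / √t) (√t / t ^ 2) t := by
  have hs := Real.sqrt_pos.2 ht
  have h := ((Real.hasDerivAt_sqrt ht.ne').inv hs.ne').const_mul (-2)
  refine h.congr_deriv ?_
  have h2 : t = √t ^ 2 := (Real.sq_sqrt ht.le).symm
  field_simp
  rw [show √t ^ 4 = (√t ^ 2) ^ 2 by ring, ← h2]

/-- The proper prime powers beyond `x` contribute `O(1 / √x)`. -/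
lemma exists_ppL_bound : ∃ C : ℝ, 0 ≤ C ∧ ∀ x y : ℝ, 1 ≤ x → x ≤ y →
    ∑ n ∈ Finset.Ioc ⌊x⌋₊ ⌊y⌋₊, (1 / (n:ℝ)) * ppL n ≤ C / √x := by
  obtain ⟨C₀, hC₀⟩ := Chebyshev.psi_sub_theta_le_mul_sqrt
  set C := max C₀ 0
  have hC : ∀ x : ℝ, Chebyshev.psi x - Chebyshev.theta x ≤ C * √x := fun x =>
    (hC₀ x).trans (by gcongr; exact le_max_left _ _)
  have hC0 : 0 ≤ C := le_max_right _ _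
  refine ⟨3 * C, by positivity, fun x y hx hxy => ?_⟩
  have hx0 : 0 < x := by linarith
  have hy0 : 0 < y := by linarith
  have hpos : ∀ t ∈ Set.Icc x y, 0 < t := fun t ht => by linarith [ht.1]
  have hderiv : ∀ t : ℝ, deriv (fun t : ℝ => 1 / t) t = -(1 / t ^ 2) := fun t => by
    simp [one_div]
  have habel := sum_mul_eq_sub_sub_integral_mul (f := fun t : ℝ => 1 / t) ppL hx0.le hxy
    (fun t ht => by
      have := (hpos t ht).ne'
      simpa [one_div] using differentiableAt_inv this)
    (by
      simp only [funext hderiv]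
      refine ContinuousOn.integrableOn_Icc ?_
      exact (continuousOn_const.div (by fun_prop) fun t ht => by
        have := hpos t ht; positivity).neg)
  simp only [hderiv, sum_ppL] at habel
  rw [habel]
  have hIint : IntervalIntegrable (fun t : ℝ => √t / t ^ 2) volume x y := by
    refine ContinuousOn.intervalIntegrable ?_
    rw [Set.uIcc_of_le hxy]
    exact ContinuousOn.div (by fun_prop) (by fun_prop) fun t ht => by
      have := hpos t ht; positivity
  have hI : ∫ t in x..y, √t / t ^ 2 = -2 / √y - -2 / √x :=
    intervalIntegral.integral_eq_sub_of_hasDerivAt (fun t ht => by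
      rw [Set.uIcc_of_le hxy] at ht
      exact hasDerivAt_inv_sqrt (hpos t ht)) hIint
  have hnorm : ‖∫ t in Set.Ioc x y, -(1 / t ^ 2) * (Chebyshev.psi t - Chebyshev.theta t)‖ ≤
      ∫ t in Set.Ioc x y, C * (√t / t ^ 2) := by
    refine norm_integral_le_of_norm_le ?_ ?_
    · exact ((intervalIntegrable_iff_integrableOn_Ioc_of_le hxy).1 hIint).const_mul C
    · filter_upwards [ae_restrict_mem measurableSet_Ioc] with t ht
      have ht0 : 0 < t := by linarith [ht.1]
      have h0 := sub_nonneg.2 (Chebyshev.theta_le_psi t)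
      rw [norm_mul, norm_neg, Real.norm_of_nonneg h0, Real.norm_of_nonneg (by positivity)]
      calc _ ≤ 1 / t ^ 2 * (C * √t) := by gcongr; exact hC t
        _ = _ := by ring
  rw [← intervalIntegral.integral_of_le hxy, ← intervalIntegral.integral_of_le hxy,
    intervalIntegral.integral_const_mul, hI, Real.norm_eq_abs] at hnorm
  rw [← intervalIntegral.integral_of_le hxy]
  have h1 := (abs_le.1 hnorm).1
  have hsx := Real.sqrt_pos.2 hx0
  have hsy := Real.sqrt_pos.2 hy0
  have h2 : 1 / y * (Chebyshev.psi y - Chebyshev.theta y) ≤ C / √y := by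
    calc _ ≤ 1 / y * (C * √y) := by gcongr; exact hC y
      _ = C / √y := by
        nth_rewrite 1 [← Real.sq_sqrt hy0.le]
        field_simp
  have h3 : 0 ≤ 1 / x * (Chebyshev.psi x - Chebyshev.theta x) :=
    mul_nonneg (by positivity) (sub_nonneg.2 (Chebyshev.theta_le_psi x))
  have h4 : C / √y ≤ C / √x := by gcongr
  have h5 : C * (-2 / √y - -2 / √x) = 2 * (C / √x) - 2 * (C / √y) := by ring
  have h6 : 0 ≤ C / √y := by positivity
  have h7 : 3 * C / √x = 3 * (C / √x) := by ring
  rw [h7]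
  linarith

/-- The weight `1 / (n log n)` in the variable `v = log n`. -/
noncomputable def w (v : ℝ) : ℝ := Real.exp (-v) / v
/-- The derivative of `w`. -/
noncomputable def w1 (v : ℝ) : ℝ := -Real.exp (-v) * (1 / v + 1 / v ^ 2)
/-- The second derivative of `w`. -/
noncomputable def w2 (v : ℝ) : ℝ := Real.exp (-v) * (1 / v + 2 / v ^ 2 + 2 / v ^ 3)

lemma hasDerivAt_exp_neg' (v : ℝ) : HasDerivAt (fun v : ℝ => Real.exp (-v)) (-Real.exp (-v)) v := by
  simpa using (hasDerivAt_id v).neg.exp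

lemma hasDerivAt_w {v : ℝ} (hv : v ≠ 0) : HasDerivAt w (w1 v) v := by
  refine ((hasDerivAt_exp_neg' v).div (hasDerivAt_id v) hv).congr_deriv ?_
  simp only [w1, id]
  field_simp
  ring

lemma hasDerivAt_w1 {v : ℝ} (hv : v ≠ 0) : HasDerivAt w1 (w2 v) v := by
  have h1 : HasDerivAt (fun v : ℝ => 1 / v + 1 / v ^ 2) (-1 / v ^ 2 - 2 / v ^ 3) v := by
    have ha := (hasDerivAt_const v (1:ℝ)).div (hasDerivAt_id v) hv
    have hb := (hasDerivAt_const v (1:ℝ)).div ((hasDerivAt_id v).pow 2) (pow_ne_zero 2 hv)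
    refine (ha.add hb).congr_deriv ?_
    simp only [id, Pi.pow_apply]
    field_simp
    norm_num
    ring
  refine ((hasDerivAt_exp_neg' v).neg.mul h1).congr_deriv ?_
  simp only [w2, Pi.neg_apply]
  field_simp
  ring

lemma continuousOn_w2 {s : Set ℝ} (hs : ∀ v ∈ s, v ≠ 0) : ContinuousOn w2 s := by
  unfold w2
  refine ContinuousOn.mul (by fun_prop) (ContinuousOn.add (ContinuousOn.add ?_ ?_) ?_)
  · exact continuousOn_const.div continuousOn_id hs
  · exact continuousOn_const.div (by fun_prop) fun v hv => pow_ne_zero 2 (hs v hv)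
  · exact continuousOn_const.div (by fun_prop) fun v hv => pow_ne_zero 3 (hs v hv)

lemma uIcc_ne_zero {a b : ℝ} (ha : 0 < a) (hab : a ≤ b) : ∀ v ∈ Set.uIcc a b, v ≠ 0 := by
  intro v hv
  rw [Set.uIcc_of_le hab] at hv
  linarith [hv.1]

lemma continuous_ramp : Continuous ramp := by unfold ramp; fun_prop

/-- Taylor's formula for `w` with integral remainder, expanded at the right endpoint. -/
lemma integral_ramp_mul_w2 {a l Y : ℝ} (ha : 0 < a) (hal : a ≤ l) (hlY : l ≤ Y) :
    ∫ v in a..Y, ramp (v - l) * w2 v = w l - w Y + w1 Y * (Y - l) := by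
  have hl : 0 < l := by linarith
  have hInt : ∀ p q : ℝ, 0 < p → p ≤ q →
      IntervalIntegrable (fun v => ramp (v - l) * w2 v) volume p q := fun p q hp hpq =>
    ContinuousOn.intervalIntegrable
      ((continuous_ramp.comp (continuous_id.sub continuous_const)).continuousOn.mul
        (continuousOn_w2 (uIcc_ne_zero hp hpq)))
  rw [← intervalIntegral.integral_add_adjacent_intervals (hInt a l ha hal) (hInt l Y hl hlY)]
  have h1 : ∫ v in a..l, ramp (v - l) * w2 v = 0 := by
    rw [intervalIntegral.integral_congr (g := fun _ => (0:ℝ)) fun v hv => ?_]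
    · simp
    · rw [Set.uIcc_of_le hal] at hv
      have : ramp (v - l) = 0 := max_eq_right (by linarith [hv.2])
      simp [this]
  have h2 : ∫ v in l..Y, ramp (v - l) * w2 v = ∫ v in l..Y, (v - l) * w2 v := by
    refine intervalIntegral.integral_congr fun v hv => ?_
    rw [Set.uIcc_of_le hlY] at hv
    have : ramp (v - l) = v - l := max_eq_left (by linarith [hv.1])
    simp [this]
  rw [h1, h2, zero_add]
  rw [intervalIntegral.integral_eq_sub_of_hasDerivAt (f := fun v => w1 v * (v - l) - w v)]
  · ring
  · intro v hv
    have hv0 := uIcc_ne_zero hl hlY v hv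
    refine (((hasDerivAt_w1 hv0).mul ((hasDerivAt_id v).sub_const l)).sub
      (hasDerivAt_w hv0)).congr_deriv ?_
    simp only [id]
    ring
  · exact ContinuousOn.intervalIntegrable
      (ContinuousOn.mul (by fun_prop) (continuousOn_w2 (uIcc_ne_zero hl hlY)))

/-- The sum `∑_{log n ≤ u} Λ(n) / (n log n)`. -/
noncomputable def lsum (u : ℝ) : ℝ :=
  ∑ n ∈ Finset.Ioc 0 ⌊Real.exp u⌋₊, ArithmeticFunction.vonMangoldt n * w (Real.log n)

lemma continuous_phi : Continuous phi := by
  have h1 := (HasLap.tsum hasLap_vM summable_vM_bound).cont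
  have h2 : phi = fun u => (∑' n : ℕ, vM n * (ramp (u - Real.log n) : ℂ)).re := by
    ext u
    rw [← ofReal_re (phi u)]
    unfold phi; push_cast; rfl
  rw [h2]
  exact continuous_re.comp h1

/-- Partial summation, twice. The integral may start at `1 / 2` because `log n > 1 / 2` whenever
`Λ n ≠ 0`. -/
lemma lsum_eq {Y : ℝ} (hY : 1 / 2 ≤ Y) : lsum Y =
    w Y * Chebyshev.psi (Real.exp Y) - w1 Y * phi Y + ∫ v in (1 / 2 : ℝ)..Y, phi v * w2 v := by
  have h1 : ∫ v in (1 / 2 : ℝ)..Y, phi v * w2 v = ∑ n ∈ Finset.Ioc 0 ⌊Real.exp Y⌋₊,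
      ∫ v in (1 / 2 : ℝ)..Y, ArithmeticFunction.vonMangoldt n * (ramp (v - Real.log n) * w2 v) := by
    rw [← intervalIntegral.integral_finsetSum]
    · refine intervalIntegral.integral_congr fun v hv => ?_
      rw [Set.uIcc_of_le hY] at hv
      simp only [phi_eq_sum hv.2, Finset.sum_mul, mul_assoc]
    · intro n _
      exact ContinuousOn.intervalIntegrable (continuousOn_const.mul
        ((continuous_ramp.comp (continuous_id.sub continuous_const)).continuousOn.mul
        (continuousOn_w2 (uIcc_ne_zero (by norm_num) hY))))
  rw [h1, phi_eq_sum le_rfl, Chebyshev.psi, Finset.mul_sum, Finset.mul_sum,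
    ← Finset.sum_sub_distrib, ← Finset.sum_add_distrib, lsum]
  refine Finset.sum_congr rfl fun n hn => ?_
  rw [Finset.mem_Ioc] at hn
  rcases eq_or_ne n 1 with rfl | hn1
  · simp
  have hn2 : (2:ℝ) ≤ n := by exact_mod_cast (by omega : 2 ≤ n)
  have hl : 1 / 2 ≤ Real.log n := by
    have := Real.log_le_log (by norm_num) hn2
    linarith [Real.log_two_gt_d9]
  have hle : Real.log n ≤ Y := (Real.log_le_iff_le_exp (by linarith)).2
    ((Nat.le_floor_iff (Real.exp_pos Y).le).1 hn.2)
  rw [intervalIntegral.integral_const_mul, integral_ramp_mul_w2 (by norm_num) hl hle, ramp,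
    max_eq_left (by linarith)]
  ring

lemma integral_exp_mul_w2 {U Y : ℝ} (hU : 0 < U) (hUY : U ≤ Y) :
    ∫ v in U..Y, Real.exp v * w2 v = (w1 Y * Real.exp Y - w Y * Real.exp Y + Real.log Y) -
      (w1 U * Real.exp U - w U * Real.exp U + Real.log U) := by
  rw [intervalIntegral.integral_eq_sub_of_hasDerivAt
    (f := fun v => w1 v * Real.exp v - w v * Real.exp v + Real.log v)]
  · intro v hv
    have hv0 := uIcc_ne_zero hU hUY v hv
    refine ((((hasDerivAt_w1 hv0).mul (Real.hasDerivAt_exp v)).sub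
      ((hasDerivAt_w hv0).mul (Real.hasDerivAt_exp v))).add
      (Real.hasDerivAt_log hv0)).congr_deriv ?_
    have : w v * Real.exp v = v⁻¹ := by
      rw [w, Real.exp_neg]; field_simp
    linear_combination -this
  · exact ContinuousOn.intervalIntegrable
      (ContinuousOn.mul (by fun_prop) (continuousOn_w2 (uIcc_ne_zero hU hUY)))

/-- The increment of `lsum u - log u` in terms of the errors of `psi` and `phi`: the corresponding
expression with `psi` and `phi` replaced by `exp` is exactly the increment of `log`. -/
lemma lsum_sub {U Y : ℝ} (hU : 1 / 2 ≤ U) (hUY : U ≤ Y) :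
    (lsum Y - Real.log Y) - (lsum U - Real.log U) =
      (w Y * (Chebyshev.psi (Real.exp Y) - Real.exp Y) - w1 Y * (phi Y - Real.exp Y)) -
      (w U * (Chebyshev.psi (Real.exp U) - Real.exp U) - w1 U * (phi U - Real.exp U)) +
      ∫ v in U..Y, (phi v - Real.exp v) * w2 v := by
  have hU0 : 0 < U := by linarith
  have hInt : ∀ p q : ℝ, 0 < p → p ≤ q →
      IntervalIntegrable (fun v => phi v * w2 v) volume p q := fun p q hp hpq =>
    ContinuousOn.intervalIntegrable (continuous_phi.continuousOn.mul
        (continuousOn_w2 (uIcc_ne_zero hp hpq)))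
  have hJnt : IntervalIntegrable (fun v => Real.exp v * w2 v) volume U Y :=
    ContinuousOn.intervalIntegrable
      (ContinuousOn.mul (by fun_prop) (continuousOn_w2 (uIcc_ne_zero hU0 hUY)))
  simp only [sub_mul]
  rw [lsum_eq hU, lsum_eq (hU.trans hUY), ← intervalIntegral.integral_add_adjacent_intervals
    (hInt (1 / 2) U (by norm_num) hU) (hInt U Y hU0 hUY), intervalIntegral.integral_sub
    (hInt U Y hU0 hUY) hJnt, integral_exp_mul_w2 hU0 hUY]
  ring

end MertensRH

/-! ### The error in Mertens' theorem -/

namespace MertensRH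
open Complex Filter Topology MeasureTheory

lemma exp_neg_eq_half (U : ℝ) : Real.exp (-U) * Real.exp (U / 2) = Real.exp (-U / 2) := by
  rw [← Real.exp_add]; ring_nf

/-- Only the term with `psi` carries a factor `U`; the term with `phi` is smaller because `phi` has a
square-root error without logarithms. -/
lemma exists_boundary_bound (hRH : RiemannHypothesis) : ∃ C : ℝ, 0 ≤ C ∧ ∀ U : ℝ, 2 ≤ U →
    |w U * (Chebyshev.psi (Real.exp U) - Real.exp U) - w1 U * (phi U - Real.exp U)| ≤
      Real.exp (-U / 2) * (3 / 32 * U + C) := by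
  obtain ⟨C₁, h1, hpsi⟩ := exists_psi_bound hRH
  obtain ⟨C₂, h2, hphi⟩ := exists_phi_bound hRH
  refine ⟨2 * C₁ + C₂, by positivity, fun U hU => ?_⟩
  have hU0 : 0 < U := by linarith
  have he := Real.exp_pos (-U)
  have he2 := Real.exp_pos (-U / 2)
  have ha : |w U * (Chebyshev.psi (Real.exp U) - Real.exp U)| ≤
      Real.exp (-U / 2) * (3 / 32 * U + 2 * C₁) := by
    rw [abs_mul, w, abs_of_pos (by positivity)]
    calc _ ≤ Real.exp (-U) / U * (Real.exp (U / 2) * (3 / 32 * U ^ 2 + C₁ * (U + 1))) := by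
          gcongr; exact hpsi U hU
      _ = Real.exp (-U / 2) * (3 / 32 * U + C₁ * ((U + 1) / U)) := by
          rw [← exp_neg_eq_half]; field_simp
      _ ≤ Real.exp (-U / 2) * (3 / 32 * U + C₁ * 2) := by
          gcongr
          rw [div_le_iff₀ hU0]; linarith
      _ = _ := by ring
  have hw1 : |w1 U| ≤ Real.exp (-U) := by
    have h3 : 1 / U ≤ 1 / 2 := one_div_le_one_div_of_le (by norm_num) hU
    have h4 : 1 / U ^ 2 ≤ 1 / 2 ^ 2 := one_div_le_one_div_of_le (by norm_num) (by gcongr)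
    rw [w1, abs_mul, abs_neg, abs_of_pos he, abs_of_pos (by positivity)]
    exact mul_le_of_le_one_right he.le (by linarith)
  have hb : |w1 U * (phi U - Real.exp U)| ≤ Real.exp (-U / 2) * C₂ := by
    rw [abs_mul]
    calc _ ≤ Real.exp (-U) * (C₂ * Real.exp (U / 2)) := by
          gcongr; exact hphi U hU0.le
      _ = _ := by rw [← exp_neg_eq_half]; ring
  calc _ ≤ _ := abs_sub _ _
    _ ≤ _ := add_le_add ha hb
    _ = _ := by ring

lemma exists_integral_bound (hRH : RiemannHypothesis) : ∃ C : ℝ, 0 ≤ C ∧ ∀ U Y : ℝ, 2 ≤ U →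
    U ≤ Y → |∫ v in U..Y, (phi v - Real.exp v) * w2 v| ≤ Real.exp (-U / 2) * C := by
  obtain ⟨C, hC, hphi⟩ := exists_phi_bound hRH
  refine ⟨4 * C, by positivity, fun U Y hU hUY => ?_⟩
  have hInt : IntervalIntegrable (fun v : ℝ => 2 * C * Real.exp (-v / 2)) volume U Y :=
    (by fun_prop : Continuous fun v : ℝ => 2 * C * Real.exp (-v / 2)).intervalIntegrable _ _
  have hI : ∫ v in U..Y, 2 * C * Real.exp (-v / 2) =
      -(4 * C * Real.exp (-Y / 2)) - -(4 * C * Real.exp (-U / 2)) := by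
    refine intervalIntegral.integral_eq_sub_of_hasDerivAt
      (f := fun v => -(4 * C * Real.exp (-v / 2))) (fun v _ => ?_) hInt
    refine ((((hasDerivAt_id v).neg.div_const 2).exp.const_mul (4 * C)).neg).congr_deriv ?_
    simp only [Pi.neg_apply, id]
    ring
  have h := intervalIntegral.norm_integral_le_of_norm_le (μ := volume)
    (f := fun v => (phi v - Real.exp v) * w2 v) hUY (ae_of_all _ fun v hv => ?_) hInt
  · rw [hI, Real.norm_eq_abs] at h
    have : 0 ≤ 4 * C * Real.exp (-Y / 2) := by positivity
    linarith
  · have hv2 : 2 ≤ v := by linarith [hv.1]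
    have hv0 : 0 < v := by linarith
    have he := Real.exp_pos (-v)
    have h3 : 1 / v ≤ 1 / 2 := one_div_le_one_div_of_le (by norm_num) hv2
    have h4 : 2 / v ^ 2 ≤ 2 / 2 ^ 2 := by gcongr
    have h5 : 2 / v ^ 3 ≤ 2 / 2 ^ 3 := by gcongr
    have h6 : |w2 v| ≤ Real.exp (-v) * 2 := by
      rw [w2, abs_of_pos (by positivity)]
      gcongr
      linarith
    rw [Real.norm_eq_abs, abs_mul]
    calc _ ≤ (C * Real.exp (v / 2)) * (Real.exp (-v) * 2) := by
          gcongr; exact hphi v hv0.le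
      _ = _ := by rw [← exp_neg_eq_half]; ring

/-- Cauchy-type estimate for `lsum u - log u`, whose leading constant `3 / 32` is inherited from `psi`. -/
lemma exists_lsum_bound (hRH : RiemannHypothesis) : ∃ C : ℝ, 0 ≤ C ∧ ∀ U Y : ℝ, 2 ≤ U → U ≤ Y →
    |(lsum Y - Real.log Y) - (lsum U - Real.log U)| ≤
      Real.exp (-U / 2) * (3 / 32 * U + C) + Real.exp (-Y / 2) * (3 / 32 * Y + C) := by
  obtain ⟨C₁, h1, hb⟩ := exists_boundary_bound hRH
  obtain ⟨C₂, h2, hi⟩ := exists_integral_bound hRH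
  refine ⟨C₁ + C₂, by positivity, fun U Y hU hUY => ?_⟩
  rw [lsum_sub (by linarith) hUY]
  have ha := hb U hU
  have hb := hb Y (hU.trans hUY)
  have hc := hi U Y hU hUY
  have hd : 0 ≤ Real.exp (-Y / 2) * C₂ := by positivity
  have he := (abs_add_le _ _).trans
    (add_le_add ((abs_sub _ _).trans (add_le_add hb ha)) hc)
  refine he.trans ?_
  linarith

/-- The sum `∑_{p ≤ x} 1 / p`. -/
noncomputable def psum (x : ℝ) : ℝ :=
  ∑ p ∈ (Finset.range (⌊x⌋₊ + 1)).filter Nat.Prime, (1 : ℝ) / p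

/-- The contribution of the proper prime powers to `lsum (log x)`. -/
noncomputable def qsum (x : ℝ) : ℝ := ∑ n ∈ Finset.Ioc 0 ⌊x⌋₊, ppL n * w (Real.log n)

lemma psum_eq {x : ℝ} (hx : 0 < x) : psum x = lsum (Real.log x) - qsum x := by
  rw [psum, lsum, qsum, Real.exp_log hx, ← Finset.sum_sub_distrib, Finset.sum_filter,
    Finset.range_eq_Ico, Finset.sum_eq_sum_Ico_succ_bot (by omega)]
  simp only [Nat.not_prime_zero, if_false, zero_add]
  refine Finset.sum_congr (by ext n; simp; omega) fun n _ => ?_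
  unfold ppL
  split_ifs with hp
  · have hl : 0 < Real.log n := Real.log_pos (by exact_mod_cast hp.one_lt)
    have hn : (0:ℝ) < n := by exact_mod_cast hp.pos
    rw [ArithmeticFunction.vonMangoldt_apply_prime hp, w, Real.exp_neg, Real.exp_log hn]
    field_simp
    simp
  · simp

lemma exists_qsum_bound : ∃ C : ℝ, 0 ≤ C ∧ ∀ x y : ℝ, 3 ≤ x → x ≤ y →
    |qsum y - qsum x| ≤ C / √x := by
  obtain ⟨C, hC, h⟩ := exists_ppL_bound
  refine ⟨C, hC, fun x y hx hxy => ?_⟩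
  have hfl : ⌊x⌋₊ ≤ ⌊y⌋₊ := Nat.floor_le_floor hxy
  have hdiff : qsum y - qsum x = ∑ n ∈ Finset.Ioc ⌊x⌋₊ ⌊y⌋₊, ppL n * w (Real.log n) := by
    rw [qsum, qsum, sub_eq_iff_eq_add', Finset.sum_Ioc_consecutive _ (Nat.zero_le _) hfl]
  have h3 : 3 ≤ ⌊x⌋₊ := Nat.le_floor (by exact_mod_cast hx)
  have hw : ∀ n ∈ Finset.Ioc ⌊x⌋₊ ⌊y⌋₊, 0 ≤ w (Real.log n) ∧ w (Real.log n) ≤ 1 / n := by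
    intro n hn
    have hn3 : (3:ℝ) ≤ n := by exact_mod_cast h3.trans (Finset.mem_Ioc.1 hn).1.le
    have hl : 1 ≤ Real.log n := by
      rw [Real.le_log_iff_exp_le (by linarith)]
      linarith [Real.exp_one_lt_d9]
    rw [w, Real.exp_neg, Real.exp_log (by linarith), one_div]
    exact ⟨by positivity, div_le_self (by positivity) hl⟩
  rw [hdiff, abs_of_nonneg (Finset.sum_nonneg fun n hn => mul_nonneg (ppL_nonneg n) (hw n hn).1)]
  refine le_trans (Finset.sum_le_sum fun n hn => ?_) (h x y (by linarith) hxy)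
  rw [mul_comm]
  exact mul_le_mul_of_nonneg_right (hw n hn).2 (ppL_nonneg n)

lemma exp_neg_log_div_two {x : ℝ} (hx : 0 < x) : Real.exp (-Real.log x / 2) = 1 / √x := by
  rw [neg_div, Real.exp_neg, Real.exp_half, Real.exp_log hx, one_div]

/-- The error in Mertens' second theorem with the leading constant `3 / 32`. -/
lemma exists_mertens_bound (hRH : RiemannHypothesis) {B : ℝ}
    (hB : Tendsto (fun x : ℝ => psum x - Real.log (Real.log x)) atTop (𝓝 B)) :
    ∃ C : ℝ, ∀ x : ℝ, Real.exp 2 ≤ x →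
      |psum x - Real.log (Real.log x) - B| ≤ (3 / 32 * Real.log x + C) / √x := by
  obtain ⟨C₁, h1, hl⟩ := exists_lsum_bound hRH
  obtain ⟨C₂, h2, hq⟩ := exists_qsum_bound
  refine ⟨C₁ + C₂, fun x hx => ?_⟩
  have hx3 : 3 ≤ x := by linarith [Real.add_one_le_exp 2]
  have hx0 : 0 < x := by linarith
  have hU : 2 ≤ Real.log x := (Real.le_log_iff_exp_le hx0).2 hx
  have hdec : Tendsto (fun y : ℝ => Real.exp (-Real.log y / 2) * (3 / 32 * Real.log y + C₁))
      atTop (𝓝 0) := by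
    have ha := tendsto_rpow_mul_exp_neg_mul_atTop_nhds_zero 1 (1 / 2) (by norm_num)
    have hb := tendsto_rpow_mul_exp_neg_mul_atTop_nhds_zero 0 (1 / 2) (by norm_num)
    have hc := ((ha.const_mul (3 / 32)).add (hb.const_mul C₁)).comp Real.tendsto_log_atTop
    simp only [mul_zero, add_zero] at hc
    refine hc.congr fun y => ?_
    simp only [Function.comp, Real.rpow_one, Real.rpow_zero]
    rw [show -(1 / 2) * Real.log y = -Real.log y / 2 by ring]
    ring
  have hlim : Tendsto (fun y : ℝ => (3 / 32 * Real.log x + (C₁ + C₂)) / √x +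
      Real.exp (-Real.log y / 2) * (3 / 32 * Real.log y + C₁)) atTop
      (𝓝 ((3 / 32 * Real.log x + (C₁ + C₂)) / √x + 0)) := tendsto_const_nhds.add hdec
  rw [add_zero] at hlim
  refine le_of_tendsto_of_tendsto ((tendsto_const_nhds.sub hB).abs) hlim ?_
  filter_upwards [eventually_ge_atTop x] with y hxy
  have hy0 : 0 < y := by linarith
  have ha := hl _ _ hU (Real.log_le_log hx0 hxy)
  have hb := hq x y hx3 hxy
  rw [psum_eq hx0, psum_eq hy0]
  rw [exp_neg_log_div_two hx0] at ha
  rw [abs_le] at ha hb ⊢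
  have hc : (3 / 32 * Real.log x + (C₁ + C₂)) / √x =
    1 / √x * (3 / 32 * Real.log x + C₁) + C₂ / √x := by ring
  constructor <;> linarith [ha.1, ha.2, hb.1, hb.2]

end MertensRH

/-- Assuming the Riemann Hypothesis, the error term
`R(x) = ∑_{p ≤ x} 1/p − log log x − B₁` in Mertens' second theorem satisfies
`|R(x)| ≤ (3 log x + 4)/(8π √x)` for all sufficiently large `x`; here `B₁` is the Mertens
constant, the limit of `∑_{p ≤ x} 1/p − log log x`. -/
theorem mertens_error_of_riemannHypothesis (hRH : RiemannHypothesis) :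
    ∀ B₁ : ℝ,
      Filter.Tendsto
        (fun x : ℝ =>
          (∑ p ∈ (Finset.range (⌊x⌋₊ + 1)).filter Nat.Prime, (1 : ℝ) / p) -
            Real.log (Real.log x))
        Filter.atTop (nhds B₁) →
      ∃ x₀ : ℝ, ∀ x : ℝ, x₀ ≤ x →
        |(∑ p ∈ (Finset.range (⌊x⌋₊ + 1)).filter Nat.Prime, (1 : ℝ) / p) -
            Real.log (Real.log x) - B₁| ≤
          (3 * Real.log x + 4) / (8 * Real.pi * Real.sqrt x) := by
  intro B₁ hB
  obtain ⟨C, hC⟩ := MertensRH.exists_mertens_bound hRH hB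
  have hpi := Real.pi_pos
  -- `π < 4` leaves room between the available constant `3 / 32` and the required one
  have hδ : 0 < 3 / (8 * Real.pi) - 3 / 32 := by
    rw [sub_pos, div_lt_div_iff₀ (by norm_num) (by positivity)]
    linarith [Real.pi_lt_four]
  refine ⟨max (Real.exp 2) (Real.exp (C / (3 / (8 * Real.pi) - 3 / 32))), fun x hx => ?_⟩
  have hx2 : Real.exp 2 ≤ x := (le_max_left _ _).trans hx
  have hx0 : 0 < x := (Real.exp_pos 2).trans_le hx2
  have hlog := (Real.le_log_iff_exp_le hx0).2 ((le_max_right _ _).trans hx)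
  rw [div_le_iff₀ hδ] at hlog
  refine (hC x hx2).trans ?_
  rw [← div_div]
  gcongr
  have h1 : (3 * Real.log x + 4) / (8 * Real.pi) =
    Real.log x * (3 / (8 * Real.pi)) + 4 / (8 * Real.pi) := by ring
  have h2 : 0 < 4 / (8 * Real.pi) := by positivity
  rw [h1]
  linarith
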